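/- Fix ν > 0, and let γ₁(λ) = μ₃(λ)/(μ₂(λ))^(3/2) denote the skewness of the CMP(λ,ν) distribution, where μ_k(λ) = E[(X − E X)^k] is the k-th central moment of X ∼ CMP(λ,ν). Then as λ → ∞, γ₁(λ) = (λ^(−1/(2ν))/√ν)·(1 − (5(ν²−1)/(48ν²))·λ^(−2/ν) − (7(ν²−1)/(24ν³))·λ^(−3/ν) + O(λ^(−4/ν))). Precisely: there exist constants C > 0 and Λ > 0 (depending only on ν) such that for all λ ≥ Λ, |√ν·λ^(1/(2ν))·γ₁(λ) − 1 + (5(ν²−1)/(48ν²))·λ^(−2/ν) + (7(ν²−1)/(24ν³))·λ^(−3/ν)| ≤ C·λ^(−4/ν). -/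

import Mathlib

open scoped BigOperators

/-- The Conway-Maxwell-Poisson normalizing constant `Z(λ,ν) = ∑_{i=0}^∞ λ^i/(i!)^ν`. -/
noncomputable def cmpZ (lam nu : ℝ) : ℝ := ∑' i : ℕ, lam ^ i / (i.factorial : ℝ) ^ nu

/-- The mean of the `CMP(λ,ν)` distribution. -/
noncomputable def cmpMean (lam nu : ℝ) : ℝ :=
  (∑' j : ℕ, (j : ℝ) * lam ^ j / (j.factorial : ℝ) ^ nu) / cmpZ lam nu

/-- The `k`-th central moment `μ_k = E[(X − E X)^k]` of the `CMP(λ,ν)` distribution. -/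
noncomputable def cmpCentralMoment (k : ℕ) (lam nu : ℝ) : ℝ :=
  (∑' j : ℕ, ((j : ℝ) - cmpMean lam nu) ^ k * lam ^ j / (j.factorial : ℝ) ^ nu) / cmpZ lam nu

/-- The skewness `γ₁ = μ₃/μ₂^{3/2}` of the `CMP(λ,ν)` distribution. -/
noncomputable def cmpSkewness (lam nu : ℝ) : ℝ :=
  cmpCentralMoment 3 lam nu / cmpCentralMoment 2 lam nu ^ ((3 : ℝ) / 2)

/-! ### Binomial coefficients and Taylor bounds -/

lemma cmp_choose_succ (a : ℝ) (n : ℕ) :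
    Ring.choose a (n + 1) = Ring.choose a n * (a - n) / (n + 1) := by
  rw [Ring.choose_eq_smul, Ring.choose_eq_smul, descPochhammer_succ_right, Polynomial.smeval_mul,
    Polynomial.smeval_sub, Polynomial.smeval_X, Polynomial.smeval_natCast, Nat.factorial_succ]
  have h1 : (n.factorial : ℝ) ≠ 0 := by exact_mod_cast Nat.factorial_ne_zero n
  have h2 : (n : ℝ) + 1 ≠ 0 := by positivity
  simp only [smul_eq_mul, pow_one, pow_zero, nsmul_eq_mul, mul_one]
  push_cast
  field_simp

lemma cmp_taylor_local (a : ℝ) (L : ℕ) :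
    (fun x : ℝ => (1 + x) ^ a - ∑ i ∈ Finset.range L, Ring.choose a i * x ^ i)
      =O[nhds 0] fun x => x ^ L := by
  have h := (Real.one_add_rpow_hasFPowerSeriesAt_zero (a := a)).isBigO_sub_partialSum_pow L
  have h2 : (fun x : ℝ => ‖x‖ ^ L) =O[nhds 0] fun x : ℝ => x ^ L := by
    apply Asymptotics.IsBigO.of_norm_right
    simp only [norm_pow]
    exact Asymptotics.isBigO_refl _ _
  refine (h.trans h2).congr_left ?_
  intro x
  simp [FormalMultilinearSeries.partialSum, binomialSeries, FormalMultilinearSeries.ofScalars,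
    mul_comm]

lemma cmp_taylor (a : ℝ) (ha : 0 < a) (L : ℕ) :
    ∃ C > 0, ∃ P : ℕ, ∀ x : ℝ, -1 ≤ x →
      |(1 + x) ^ a - ∑ i ∈ Finset.range L, Ring.choose a i * x ^ i|
        ≤ C * (|x| ^ L + |x| ^ (L + P)) := by
  obtain ⟨C1, hC1, h1⟩ := (cmp_taylor_local a L).exists_pos
  rw [Asymptotics.IsBigOWith, Metric.eventually_nhds_iff] at h1
  obtain ⟨δ, hδ, h1⟩ := h1
  set P := ⌈a⌉₊ with hP
  set S := ∑ i ∈ Finset.range L, |Ring.choose a i| with hS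
  have hS0 : 0 ≤ S := Finset.sum_nonneg fun i _ => abs_nonneg _
  set δ' := min δ 1 with hδ'
  have hδ'0 : 0 < δ' := lt_min hδ one_pos
  set K := (1 / δ') with hK
  have hK1 : 1 ≤ K := by
    rw [hK, le_div_iff₀ hδ'0]; simp [hδ']
  refine ⟨C1 + (2 ^ P * K ^ L * K ^ P + S * K ^ L), by positivity, P, fun x hx => ?_⟩
  by_cases hxd : |x| < δ'
  · have := h1 (y := x) (by simpa using lt_of_lt_of_le hxd (min_le_left _ _))
    simp only [Real.norm_eq_abs, abs_pow] at this
    calc _ ≤ C1 * |x| ^ L := this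
      _ ≤ (C1 + (2 ^ P * K ^ L * K ^ P + S * K ^ L)) * (|x| ^ L + |x| ^ (L + P)) := by
        apply mul_le_mul
        · have : 0 ≤ (2 ^ P * K ^ L * K ^ P + S * K ^ L) := by positivity
          linarith
        · have : 0 ≤ |x| ^ (L + P) := by positivity
          linarith
        · positivity
        · positivity
  · push Not at hxd
    have hKx : 1 ≤ K * |x| := by
      rw [hK, one_div, inv_mul_eq_div, le_div_iff₀ hδ'0]; linarith
    have hx0 : 0 ≤ |x| := abs_nonneg x
    have hb1 : (1 + x) ^ a ≤ (1 + |x|) ^ P := by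
      calc (1 + x) ^ a ≤ (1 + |x|) ^ a :=
            Real.rpow_le_rpow (by linarith) (by linarith [le_abs_self x]) ha.le
        _ ≤ (1 + |x|) ^ (P : ℝ) :=
            Real.rpow_le_rpow_of_exponent_le (by linarith) (Nat.le_ceil a)
        _ = _ := Real.rpow_natCast _ _
    have hb2 : (1 + |x|) ^ P ≤ 2 ^ P * K ^ L * K ^ P * |x| ^ (L + P) := by
      calc (1 + |x|) ^ P ≤ (2 * (K * |x|)) ^ P := by
            apply pow_le_pow_left₀ (by positivity)
            nlinarith
        _ = 2 ^ P * (K * |x|) ^ P * 1 := by rw [mul_pow, mul_one]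
        _ ≤ 2 ^ P * (K * |x|) ^ P * (K * |x|) ^ L := by
            apply mul_le_mul_of_nonneg_left (one_le_pow₀ hKx) (by positivity)
        _ = _ := by rw [mul_pow, mul_pow]; ring
    have hb3 : |∑ i ∈ Finset.range L, Ring.choose a i * x ^ i| ≤ S * K ^ L * |x| ^ L := by
      calc _ ≤ ∑ i ∈ Finset.range L, |Ring.choose a i * x ^ i| := Finset.abs_sum_le_sum_abs _ _
        _ ≤ ∑ i ∈ Finset.range L, |Ring.choose a i| * (K * |x|) ^ L := by
            apply Finset.sum_le_sum
            intro i hi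
            rw [abs_mul, abs_pow]
            apply mul_le_mul_of_nonneg_left _ (abs_nonneg _)
            calc |x| ^ i ≤ (K * |x|) ^ i := by
                  apply pow_le_pow_left₀ hx0
                  nlinarith
              _ ≤ (K * |x|) ^ L := pow_le_pow_right₀ hKx (Finset.mem_range.1 hi).le
        _ = _ := by rw [← Finset.sum_mul, mul_pow]; ring
    have hpos : 0 ≤ (1 + x) ^ a := Real.rpow_nonneg (by linarith) _
    have habs := abs_sub ((1 + x) ^ a) (∑ i ∈ Finset.range L, Ring.choose a i * x ^ i)
    rw [abs_of_nonneg hpos] at habs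
    have e1 : 0 ≤ |x| ^ L := by positivity
    have e2 : 0 ≤ |x| ^ (L + P) := by positivity
    have e3 : 0 ≤ 2 ^ P * K ^ L * K ^ P * |x| ^ L := by positivity
    have e4 : 0 ≤ S * K ^ L * |x| ^ (L + P) := by positivity
    nlinarith [mul_nonneg hC1.le e1, mul_nonneg hC1.le e2]

/-- Lower bound used for the a priori moment estimates. -/
lemma cmp_drift (a : ℝ) (ha : 0 < a) (x : ℝ) (hx : -1 ≤ x) :
    min 1 a * x ^ 2 ≤ ((1 + x) ^ a - 1) * (x * (2 + x)) := by
  have key : ∀ y : ℝ, 0 ≤ y → y ≤ 1 → min 1 a * (1 - y) ≤ 1 - y ^ a := by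
    intro y hy0 hy1
    rcases le_total a 1 with h | h
    · rw [min_eq_right h]
      have := rpow_one_add_le_one_add_mul_self (s := y - 1) (by linarith) ha.le h
      rw [show 1 + (y - 1) = y by ring] at this
      linarith
    · rw [min_eq_left h]
      have := Real.rpow_le_rpow_of_exponent_ge' hy0 hy1 zero_le_one h
      rw [Real.rpow_one] at this
      linarith
  have hc : 0 < min 1 a := lt_min one_pos ha
  rcases le_total x 0 with h | h
  · have h1 := key (1 + x) (by linarith) (by linarith)
    have h2 : 0 ≤ (-x) * (2 + x) := mul_nonneg (by linarith) (by linarith)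
    have h3 := mul_le_mul_of_nonneg_right h1 h2
    nlinarith [mul_nonneg (mul_nonneg hc.le (sq_nonneg x)) (by linarith : 0 ≤ 1 + x)]
  · have hpos : 0 < 1 + x := by linarith
    have h1 := key (1 + x)⁻¹ (by positivity) (inv_le_one_of_one_le₀ (by linarith))
    rw [Real.inv_rpow hpos.le] at h1
    set q := (1 + x) ^ a with hq
    have hq1 : 1 ≤ q := Real.one_le_rpow (by linarith) ha.le
    have h2 : 1 - q⁻¹ ≤ q - 1 := by
      have : 1 - q⁻¹ = (q - 1) / q := by field_simp
      rw [this]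
      exact div_le_self (by linarith) hq1
    have h3 : min 1 a * (1 - (1 + x)⁻¹) = min 1 a * x / (1 + x) := by
      field_simp; ring
    rw [h3] at h1
    have h4 : min 1 a * x ≤ (q - 1) * (1 + x) := by
      rw [← div_le_iff₀ hpos]; linarith
    have h5 := mul_le_mul_of_nonneg_right h4 h
    nlinarith [mul_nonneg (by linarith : 0 ≤ q - 1) h]

/-! ### Weights, expectation and the Stein identity -/

/-- CMP weights, with `lam = u ^ (-ν)`. -/
noncomputable def cmpW (ν u : ℝ) (j : ℕ) : ℝ := (u ^ (-ν)) ^ j / (j.factorial : ℝ) ^ ν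

/-- Expectation of `f (u X - 1)` for `X ∼ CMP(u ^ (-ν), ν)`. -/
noncomputable def cmpE (ν u : ℝ) (f : ℝ → ℝ) : ℝ :=
  (∑' j : ℕ, f (u * j - 1) * cmpW ν u j) / cmpZ (u ^ (-ν)) ν

/-- Polynomial growth on `[-1, ∞)`. -/
def CmpPG (f : ℝ → ℝ) : Prop := ∃ C : ℝ, ∃ p : ℕ, ∀ x : ℝ, -1 ≤ x → |f x| ≤ C * (2 + x) ^ p

lemma CmpPG.of_le {f g : ℝ → ℝ} (hg : CmpPG g) (h : ∀ x, -1 ≤ x → |f x| ≤ |g x|) : CmpPG f := by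
  obtain ⟨C, p, H⟩ := hg
  exact ⟨C, p, fun x hx => (h x hx).trans (H x hx)⟩

lemma CmpPG.mul {f g : ℝ → ℝ} (hf : CmpPG f) (hg : CmpPG g) : CmpPG (fun x => f x * g x) := by
  obtain ⟨C, p, H⟩ := hf
  obtain ⟨D, q, K⟩ := hg
  refine ⟨C * D, p + q, fun x hx => ?_⟩
  rw [abs_mul]
  calc |f x| * |g x| ≤ (C * (2 + x) ^ p) * (D * (2 + x) ^ q) :=
        mul_le_mul (H x hx) (K x hx) (abs_nonneg _) ((abs_nonneg _).trans (H x hx))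
    _ = _ := by ring

lemma CmpPG.add {f g : ℝ → ℝ} (hf : CmpPG f) (hg : CmpPG g) : CmpPG (fun x => f x + g x) := by
  obtain ⟨C, p, H⟩ := hf
  obtain ⟨D, q, K⟩ := hg
  refine ⟨|C| + |D|, p + q, fun x hx => ?_⟩
  have h1 : 1 ≤ 2 + x := by linarith
  have a1 : (2 + x) ^ p ≤ (2 + x) ^ (p + q) := pow_le_pow_right₀ h1 (by omega)
  have a2 : (2 + x) ^ q ≤ (2 + x) ^ (p + q) := pow_le_pow_right₀ h1 (by omega)
  have b1 : C * (2 + x) ^ p ≤ |C| * (2 + x) ^ (p + q) :=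
    mul_le_mul (le_abs_self C) a1 (by positivity) (abs_nonneg _)
  have b2 : D * (2 + x) ^ q ≤ |D| * (2 + x) ^ (p + q) :=
    mul_le_mul (le_abs_self D) a2 (by positivity) (abs_nonneg _)
  calc |f x + g x| ≤ |f x| + |g x| := abs_add_le _ _
    _ ≤ _ := by rw [add_mul]; linarith [H x hx, K x hx]

lemma CmpPG.const (c : ℝ) : CmpPG (fun _ => c) := ⟨|c|, 0, fun x _ => by simp⟩

lemma CmpPG.id : CmpPG (fun x => x) := ⟨1, 1, fun x hx => by
  rw [abs_le]; constructor <;> linarith⟩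

lemma CmpPG.sub {f g : ℝ → ℝ} (hf : CmpPG f) (hg : CmpPG g) : CmpPG (fun x => f x - g x) := by
  have := hf.add ((CmpPG.const (-1)).mul hg)
  simpa [sub_eq_add_neg] using this

lemma CmpPG.abs {f : ℝ → ℝ} (hf : CmpPG f) : CmpPG (fun x => |f x|) :=
  hf.of_le fun x _ => by simp

lemma CmpPG.pow {f : ℝ → ℝ} (hf : CmpPG f) (n : ℕ) : CmpPG (fun x => f x ^ n) := by
  induction n with
  | zero => simpa using CmpPG.const 1
  | succ n ih => simpa [pow_succ] using ih.mul hf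

lemma CmpPG.sum {ι : Type*} (s : Finset ι) {f : ι → ℝ → ℝ} (hf : ∀ i ∈ s, CmpPG (f i)) :
    CmpPG (fun x => ∑ i ∈ s, f i x) := by
  classical
  induction s using Finset.induction_on with
  | empty => simpa using CmpPG.const 0
  | insert a s ha ih =>
    simp only [Finset.sum_insert ha]
    exact (hf a (Finset.mem_insert_self _ _)).add
      (ih fun i hi => hf i (Finset.mem_insert_of_mem hi))

lemma CmpPG.rpow {a : ℝ} (ha : 0 < a) : CmpPG (fun x => (1 + x) ^ a) := by
  refine ⟨1, ⌈a⌉₊, fun x hx => ?_⟩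
  rw [abs_of_nonneg (Real.rpow_nonneg (by linarith) _), one_mul]
  calc (1 + x) ^ a ≤ (2 + x) ^ a := Real.rpow_le_rpow (by linarith) (by linarith) ha.le
    _ ≤ (2 + x) ^ ((⌈a⌉₊ : ℕ) : ℝ) :=
      Real.rpow_le_rpow_of_exponent_le (by linarith) (Nat.le_ceil a)
    _ = _ := Real.rpow_natCast _ _

lemma cmpW_pos {ν u : ℝ} (hu : 0 < u) (j : ℕ) : 0 < cmpW ν u j := by
  have : (0 : ℝ) < j.factorial := by exact_mod_cast Nat.factorial_pos j
  unfold cmpW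
  have := Real.rpow_pos_of_pos hu (-ν)
  positivity

lemma cmpW_succ {ν u : ℝ} (hu : 0 < u) (j : ℕ) :
    (u * ((j + 1 : ℕ) : ℝ)) ^ ν * cmpW ν u (j + 1) = cmpW ν u j := by
  have h0 : (0 : ℝ) < j.factorial := by exact_mod_cast Nat.factorial_pos j
  have h1 : (0 : ℝ) < ((j + 1 : ℕ) : ℝ) := by positivity
  unfold cmpW
  rw [Nat.factorial_succ, Nat.cast_mul, Real.mul_rpow hu.le h1.le, Real.mul_rpow h1.le h0.le,
    Real.rpow_neg hu.le, pow_succ]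
  have := Real.rpow_pos_of_pos hu ν
  have := Real.rpow_pos_of_pos h1 ν
  have := Real.rpow_pos_of_pos h0 ν
  field_simp

lemma cmpW_summable_pow {ν u : ℝ} (hν : 0 < ν) (hu : 0 < u) (p : ℕ) :
    Summable fun j : ℕ => ((j : ℝ) + 1) ^ p * cmpW ν u j := by
  have hpos : ∀ j : ℕ, 0 < ((j : ℝ) + 1) ^ p * cmpW ν u j := fun j => by
    have := cmpW_pos (ν := ν) hu j
    positivity
  apply summable_of_ratio_test_tendsto_lt_one (l := 0) zero_lt_one
  · exact Filter.Eventually.of_forall fun j => (hpos j).ne'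
  · have hA : Filter.Tendsto (fun j : ℕ => (u * ((j + 1 : ℕ) : ℝ)) ^ (-ν)) Filter.atTop (nhds 0) := by
      have h1 : Filter.Tendsto (fun j : ℕ => u * ((j + 1 : ℕ) : ℝ)) Filter.atTop Filter.atTop :=
        Filter.Tendsto.const_mul_atTop hu
          (tendsto_natCast_atTop_atTop.comp (Filter.tendsto_add_atTop_nat 1))
      exact (tendsto_rpow_neg_atTop hν).comp h1
    have hB : Filter.Tendsto (fun j : ℕ => 2 ^ p * (u * ((j + 1 : ℕ) : ℝ)) ^ (-ν))
        Filter.atTop (nhds 0) := by simpa using hA.const_mul (2 ^ p)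
    refine squeeze_zero (fun j => by positivity) (fun j => ?_) hB
    rw [Real.norm_of_nonneg (hpos _).le, Real.norm_of_nonneg (hpos _).le, div_le_iff₀ (hpos j),
      ← cmpW_succ hu j]
    have hx : 0 < u * ((j + 1 : ℕ) : ℝ) := by positivity
    have hw := cmpW_pos (ν := ν) hu (j + 1)
    have : (u * ((j + 1 : ℕ) : ℝ)) ^ (-ν) * (u * ((j + 1 : ℕ) : ℝ)) ^ ν = 1 := by
      rw [← Real.rpow_add hx]; simp
    calc (((j + 1 : ℕ) : ℝ) + 1) ^ p * cmpW ν u (j + 1)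
        ≤ (2 * ((j : ℝ) + 1)) ^ p * cmpW ν u (j + 1) := by
          apply mul_le_mul_of_nonneg_right _ hw.le
          apply pow_le_pow_left₀ (by positivity)
          push_cast
          have : (0 : ℝ) ≤ j := by positivity
          linarith
      _ = 2 ^ p * ((j : ℝ) + 1) ^ p * cmpW ν u (j + 1) *
          ((u * ((j + 1 : ℕ) : ℝ)) ^ (-ν) * (u * ((j + 1 : ℕ) : ℝ)) ^ ν) := by
          rw [this, mul_pow]; ring
      _ = _ := by ring

lemma CmpPG.summable {f : ℝ → ℝ} (hf : CmpPG f) {ν u : ℝ} (hν : 0 < ν) (hu : 0 < u) :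
    Summable fun j : ℕ => f (u * j - 1) * cmpW ν u j := by
  obtain ⟨C, p, H⟩ := hf
  have hs := (cmpW_summable_pow hν hu p).mul_left (|C| * (1 + u) ^ p)
  refine Summable.of_norm_bounded hs fun j => ?_
  have hj : (0 : ℝ) ≤ j := by positivity
  have hw := cmpW_pos (ν := ν) hu j
  rw [norm_mul, Real.norm_eq_abs, Real.norm_of_nonneg hw.le]
  have h1 := H (u * j - 1) (by nlinarith)
  have h2 : C * (2 + (u * j - 1)) ^ p ≤ |C| * ((1 + u) * (j + 1)) ^ p := by
    apply mul_le_mul (le_abs_self C) _ (by have : 0 ≤ u * j := by positivity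
                                           have : 0 ≤ 2 + (u * j - 1) := by linarith
                                           positivity) (abs_nonneg _)
    apply pow_le_pow_left₀ <;> nlinarith
  calc _ ≤ (|C| * ((1 + u) * (j + 1)) ^ p) * cmpW ν u j :=
        mul_le_mul_of_nonneg_right (h1.trans h2) hw.le
    _ = _ := by rw [mul_pow]; ring

lemma cmpZ_eq (ν u : ℝ) : cmpZ (u ^ (-ν)) ν = ∑' j, cmpW ν u j := rfl

lemma cmpW_summable {ν u : ℝ} (hν : 0 < ν) (hu : 0 < u) : Summable (cmpW ν u) := by
  simpa using cmpW_summable_pow hν hu 0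

lemma cmpZ_pos {ν u : ℝ} (hν : 0 < ν) (hu : 0 < u) : 0 < cmpZ (u ^ (-ν)) ν := by
  rw [cmpZ_eq]
  exact (cmpW_summable hν hu).tsum_pos (fun j => (cmpW_pos hu j).le) 0 (cmpW_pos hu 0)

section
variable {ν u : ℝ} (hν : 0 < ν) (hu : 0 < u)

lemma cmpE_add (hν : 0 < ν) (hu : 0 < u) {f g : ℝ → ℝ} (hf : CmpPG f) (hg : CmpPG g) :
    cmpE ν u (fun x => f x + g x) = cmpE ν u f + cmpE ν u g := by
  unfold cmpE
  rw [← add_div, ← (hf.summable hν hu).tsum_add (hg.summable hν hu)]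
  simp only [add_mul]

lemma cmpE_const_mul (c : ℝ) (f : ℝ → ℝ) :
    cmpE ν u (fun x => c * f x) = c * cmpE ν u f := by
  unfold cmpE
  simp only [mul_assoc]
  rw [tsum_mul_left, mul_div_assoc]

lemma cmpE_sub (hν : 0 < ν) (hu : 0 < u) {f g : ℝ → ℝ} (hf : CmpPG f) (hg : CmpPG g) :
    cmpE ν u (fun x => f x - g x) = cmpE ν u f - cmpE ν u g := by
  unfold cmpE
  rw [← sub_div, ← (hf.summable hν hu).tsum_sub (hg.summable hν hu)]
  simp only [sub_mul]

lemma cmpE_one (hν : 0 < ν) (hu : 0 < u) : cmpE ν u (fun _ => 1) = 1 := by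
  unfold cmpE
  simp only [one_mul]
  rw [← cmpZ_eq, div_self (cmpZ_pos hν hu).ne']

lemma cmpE_const (hν : 0 < ν) (hu : 0 < u) (c : ℝ) : cmpE ν u (fun _ => c) = c := by
  have := cmpE_const_mul (ν := ν) (u := u) c (fun _ => 1)
  rw [cmpE_one hν hu] at this
  simpa using this

lemma cmpE_sum (hν : 0 < ν) (hu : 0 < u) {ι : Type*} (s : Finset ι) {f : ι → ℝ → ℝ}
    (hf : ∀ i ∈ s, CmpPG (f i)) :
    cmpE ν u (fun x => ∑ i ∈ s, f i x) = ∑ i ∈ s, cmpE ν u (f i) := by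
  classical
  induction s using Finset.induction_on with
  | empty => simpa using cmpE_const hν hu 0
  | insert a s ha ih =>
    simp only [Finset.sum_insert ha]
    have h1 := hf a (Finset.mem_insert_self _ _)
    have h2 : ∀ i ∈ s, CmpPG (f i) := fun i hi => hf i (Finset.mem_insert_of_mem hi)
    rw [cmpE_add hν hu h1 (CmpPG.sum s h2), ih h2]

lemma cmpE_mono (hν : 0 < ν) (hu : 0 < u) {f g : ℝ → ℝ} (hf : CmpPG f) (hg : CmpPG g)
    (h : ∀ x, -1 ≤ x → f x ≤ g x) : cmpE ν u f ≤ cmpE ν u g := by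
  unfold cmpE
  apply div_le_div_of_nonneg_right _ (cmpZ_pos hν hu).le
  apply (hf.summable hν hu).tsum_le_tsum _ (hg.summable hν hu)
  intro j
  apply mul_le_mul_of_nonneg_right _ (cmpW_pos hu j).le
  apply h
  have : 0 ≤ u * j := by positivity
  linarith

lemma cmpE_nonneg (hν : 0 < ν) (hu : 0 < u) {f : ℝ → ℝ} (hf : CmpPG f)
    (h : ∀ x, -1 ≤ x → 0 ≤ f x) : 0 ≤ cmpE ν u f := by
  have := cmpE_mono hν hu (CmpPG.const 0) hf h
  rwa [cmpE_const hν hu] at this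

lemma abs_cmpE_le (hν : 0 < ν) (hu : 0 < u) {f g : ℝ → ℝ} (hf : CmpPG f) (hg : CmpPG g)
    (h : ∀ x, -1 ≤ x → |f x| ≤ g x) : |cmpE ν u f| ≤ cmpE ν u g := by
  rw [abs_le]
  constructor
  · have := cmpE_mono hν hu ((CmpPG.const (-1)).mul hg) hf
      (fun x hx => by linarith [(abs_le.1 (h x hx)).1])
    rw [cmpE_const_mul] at this
    linarith
  · exact cmpE_mono hν hu hf hg fun x hx => (abs_le.1 (h x hx)).2

lemma cmpE_stein (hν : 0 < ν) (hu : 0 < u) {f : ℝ → ℝ} (hf : CmpPG f) :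
    cmpE ν u (fun x => (1 + x) ^ ν * f x) = cmpE ν u (fun x => f (x + u)) := by
  unfold cmpE
  congr 1
  have hs := ((CmpPG.rpow hν).mul hf).summable hν hu
  rw [hs.tsum_eq_zero_add]
  have h0 : (1 + (u * ((0 : ℕ) : ℝ) - 1)) ^ ν = 0 := by
    simp [Real.zero_rpow hν.ne']
  rw [h0, zero_mul, zero_mul, zero_add]
  congr 1
  ext j
  rw [← cmpW_succ hu j, show 1 + (u * ((j + 1 : ℕ) : ℝ) - 1) = u * ((j + 1 : ℕ) : ℝ) by ring,
    show u * ((j + 1 : ℕ) : ℝ) - 1 = u * (j : ℝ) - 1 + u by push_cast; ring]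
  ring

end

/-! ### A priori moment bounds -/

lemma cmp_shift_bound (k : ℕ) : ∃ D > 0, ∀ x u : ℝ, 0 < u → u ≤ 1 →
    (x + u) ^ (2 * k + 1) * (2 + (x + u)) - x ^ (2 * k + 1) * (2 + x)
      ≤ D * u * (x ^ (2 * k) + u ^ (2 * k) + x ^ (2 * k + 2)) := by
  set A : ℝ := (2 * k + 2) * 2 ^ (2 * k + 1) with hA
  refine ⟨3 * A, by positivity, fun x u hu hu1 => ?_⟩
  have gen : ∀ m : ℕ, m ≤ 2 * k + 1 →
      (x + u) ^ (m + 1) - x ^ (m + 1) ≤ A * u * (|x| ^ m + u ^ m) := by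
    intro m hm
    have h1 := abs_pow_sub_pow_le (x + u) x (m + 1)
    rw [add_sub_cancel_left, abs_of_pos hu, Nat.add_sub_cancel] at h1
    have h2 : max |x + u| |x| ≤ |x| + u := by
      apply max_le
      · calc |x + u| ≤ |x| + |u| := abs_add_le _ _
          _ = _ := by rw [abs_of_pos hu]
      · linarith
    have h3 : (max |x + u| |x|) ^ m ≤ (|x| + u) ^ m :=
      pow_le_pow_left₀ (le_max_of_le_right (abs_nonneg _)) h2 m
    have h4 := add_pow_le (abs_nonneg x) hu.le m
    have h5 : (2 : ℝ) ^ (m - 1) ≤ 2 ^ (2 * k + 1) :=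
      pow_le_pow_right₀ (by norm_num) (by omega)
    have hp : 0 ≤ |x| ^ m + u ^ m := by positivity
    have hm' : ((m + 1 : ℕ) : ℝ) ≤ 2 * k + 2 := by exact_mod_cast (by omega : m + 1 ≤ 2 * k + 2)
    calc _ ≤ _ := le_abs_self _
      _ ≤ _ := h1
      _ ≤ u * (2 * k + 2) * (2 ^ (2 * k + 1) * (|x| ^ m + u ^ m)) := by
        apply mul_le_mul
        · exact mul_le_mul_of_nonneg_left hm' hu.le
        · exact h3.trans (h4.trans (mul_le_mul_of_nonneg_right h5 hp))
        · positivity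
        · positivity
      _ = _ := by rw [hA]; ring
  have g1 := gen (2 * k) (by omega)
  have g2 := gen (2 * k + 1) le_rfl
  have e0 : |x| ^ (2 * k) = x ^ (2 * k) := by rw [pow_mul, sq_abs, ← pow_mul]
  have e1 : |x| ^ (2 * k + 1) ≤ x ^ (2 * k) + x ^ (2 * k + 2) := by
    rw [pow_succ, pow_add x, e0]
    have : 0 ≤ x ^ (2 * k) := by rw [← e0]; positivity
    have h : |x| ≤ 1 + x ^ 2 := by nlinarith [sq_abs x, sq_nonneg (|x| - 1)]
    nlinarith
  have e2 : u ^ (2 * k + 1) ≤ u ^ (2 * k) := pow_le_pow_of_le_one hu.le hu1 (by omega)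
  rw [e0] at g1
  have p1 : 0 ≤ x ^ (2 * k) := by rw [← e0]; positivity
  have p2 : 0 ≤ x ^ (2 * k + 2) := by
    rw [show 2 * k + 2 = 2 * (k + 1) by ring, pow_mul]; positivity
  have p3 : 0 ≤ u ^ (2 * k) := by positivity
  have hAu : 0 ≤ A * u := by positivity
  have q1 : A * u * (|x| ^ (2 * k + 1) + u ^ (2 * k + 1)) ≤
      A * u * (x ^ (2 * k) + x ^ (2 * k + 2) + u ^ (2 * k)) :=
    mul_le_mul_of_nonneg_left (by linarith) hAu
  have q2 : 0 ≤ A * u * x ^ (2 * k + 2) := by positivity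
  have id1 : (x + u) ^ (2 * k + 1) * (2 + (x + u)) - x ^ (2 * k + 1) * (2 + x) =
      2 * ((x + u) ^ (2 * k + 1) - x ^ (2 * k + 1)) +
        ((x + u) ^ (2 * k + 1 + 1) - x ^ (2 * k + 1 + 1)) := by ring
  rw [id1]
  nlinarith

lemma cmp_apriori_even {ν : ℝ} (hν : 0 < ν) (k : ℕ) :
    ∃ C > 0, ∃ u0 > 0, u0 ≤ 1 ∧ ∀ u : ℝ, 0 < u → u ≤ u0 →
      cmpE ν u (fun x => x ^ (2 * k)) ≤ C * u ^ k := by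
  induction k with
  | zero =>
    refine ⟨1, one_pos, 1, one_pos, le_rfl, fun u hu _ => ?_⟩
    simp [cmpE_one hν hu]
  | succ k ih =>
    obtain ⟨C, hC, u0, hu0, hu01, H⟩ := ih
    obtain ⟨D, hD, hs⟩ := cmp_shift_bound k
    set c := min 1 ν with hc
    have hc0 : 0 < c := lt_min one_pos hν
    refine ⟨2 / c * (D * (C + 1)), by positivity, min u0 (c / (2 * D)), by positivity,
      (min_le_left _ _).trans hu01, fun u hu hule => ?_⟩
    have hu1 : u ≤ u0 := hule.trans (min_le_left _ _)
    have hu2 : D * u ≤ c / 2 := by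
      have := hule.trans (min_le_right _ _)
      rw [le_div_iff₀ (by positivity)] at this
      linarith
    have hid := CmpPG.id
    have hxu : CmpPG (fun x => x + u) := hid.add (CmpPG.const u)
    have hf : CmpPG (fun x => x ^ (2 * k + 1) * (2 + x)) :=
      (hid.pow _).mul ((CmpPG.const 2).add hid)
    have hfu : CmpPG (fun x => (x + u) ^ (2 * k + 1) * (2 + (x + u))) :=
      (hxu.pow _).mul ((CmpPG.const 2).add hxu)
    have h1 : cmpE ν u (fun x => c * x ^ (2 * (k + 1))) ≤
        cmpE ν u (fun x => (1 + x) ^ ν * (x ^ (2 * k + 1) * (2 + x))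
          - x ^ (2 * k + 1) * (2 + x)) := by
      apply cmpE_mono hν hu ((CmpPG.const c).mul (hid.pow _))
        (((CmpPG.rpow hν).mul hf).sub hf)
      intro x hx
      have hd := cmp_drift ν hν x hx
      have hp : 0 ≤ x ^ (2 * k) := by rw [pow_mul]; positivity
      have := mul_le_mul_of_nonneg_left hd hp
      calc c * x ^ (2 * (k + 1)) = x ^ (2 * k) * (min 1 ν * x ^ 2) := by rw [hc]; ring
        _ ≤ _ := this
        _ = _ := by ring
    rw [cmpE_const_mul, cmpE_sub hν hu ((CmpPG.rpow hν).mul hf) hf, cmpE_stein hν hu hf,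
      ← cmpE_sub hν hu hfu hf] at h1
    have hP1 : CmpPG (fun x => x ^ (2 * k) + u ^ (2 * k)) := (hid.pow _).add (CmpPG.const _)
    have h2 : cmpE ν u (fun x => (x + u) ^ (2 * k + 1) * (2 + (x + u))
          - x ^ (2 * k + 1) * (2 + x)) ≤
        cmpE ν u (fun x => (D * u) * (x ^ (2 * k) + u ^ (2 * k) + x ^ (2 * (k + 1)))) := by
      apply cmpE_mono hν hu (hfu.sub hf) ((CmpPG.const _).mul (hP1.add (hid.pow _)))
      intro x _
      exact hs x u hu (hu1.trans hu01)
    rw [cmpE_const_mul, cmpE_add hν hu hP1 (hid.pow _),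
      cmpE_add hν hu (hid.pow _) (CmpPG.const _), cmpE_const hν hu] at h2
    have h3 := H u hu hu1
    set E := cmpE ν u (fun x => x ^ (2 * (k + 1))) with hE
    have hE0 : 0 ≤ E := cmpE_nonneg hν hu (hid.pow _) fun x _ => by
      rw [pow_mul]; positivity
    have h4 : u ^ (2 * k) ≤ u ^ k :=
      pow_le_pow_of_le_one hu.le (hu1.trans hu01) (by omega)
    have h5 : D * u * (cmpE ν u (fun x => x ^ (2 * k)) + u ^ (2 * k) + E)
        ≤ D * u * (C * u ^ k + u ^ k) + c / 2 * E := by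
      have := mul_le_mul_of_nonneg_right hu2 hE0
      have := mul_le_mul_of_nonneg_left (add_le_add h3 h4) (by positivity : 0 ≤ D * u)
      nlinarith
    have h6 : c / 2 * E ≤ D * (C + 1) * u ^ (k + 1) := by
      have : D * u * (C * u ^ k + u ^ k) = D * (C + 1) * u ^ (k + 1) := by ring
      linarith
    have : E = 2 / c * (c / 2 * E) := by field_simp
    rw [this]
    calc _ ≤ 2 / c * (D * (C + 1) * u ^ (k + 1)) :=
          mul_le_mul_of_nonneg_left h6 (by positivity)
      _ = _ := by ring

lemma cmp_isBigO_of_le {f g : ℝ → ℝ} {C u0 : ℝ} (hu0 : 0 < u0)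
    (h : ∀ u, 0 < u → u ≤ u0 → |f u| ≤ C * |g u|) : f =O[nhdsWithin 0 (Set.Ioi 0)] g := by
  apply Asymptotics.IsBigO.of_bound C
  filter_upwards [Ioc_mem_nhdsGT hu0] with u hu
  exact h u hu.1 hu.2

lemma cmp_pow_isBigO {m n : ℕ} (h : n ≤ m) :
    (fun u : ℝ => u ^ m) =O[nhdsWithin 0 (Set.Ioi 0)] fun u => u ^ n := by
  apply cmp_isBigO_of_le (C := 1) one_pos
  intro u hu hu1
  rw [one_mul, abs_of_pos (by positivity), abs_of_pos (by positivity)]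
  exact pow_le_pow_of_le_one hu.le hu1 h

lemma cmp_apriori_even_isBigO {ν : ℝ} (hν : 0 < ν) (k : ℕ) :
    (fun u => cmpE ν u (fun x => x ^ (2 * k))) =O[nhdsWithin 0 (Set.Ioi 0)] fun u => u ^ k := by
  obtain ⟨C, hC, u0, hu0, hu01, H⟩ := cmp_apriori_even hν k
  apply cmp_isBigO_of_le (C := C) hu0
  intro u hu hul
  rw [abs_of_nonneg (cmpE_nonneg hν hu (CmpPG.id.pow _) fun x _ => by rw [pow_mul]; positivity),
    abs_of_pos (by positivity)]
  exact H u hu hul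

lemma cmp_apriori_abs {ν : ℝ} (hν : 0 < ν) (k : ℕ) :
    (fun u => cmpE ν u (fun x => |x| ^ k)) =O[nhdsWithin 0 (Set.Ioi 0)] fun u => u ^ (k / 2) := by
  have e0 : ∀ (x : ℝ) (m : ℕ), |x| ^ (2 * m) = x ^ (2 * m) := fun x m => by
    rw [pow_mul, sq_abs, ← pow_mul]
  obtain ⟨m, hm | hm⟩ := Nat.even_or_odd' k
  · subst hm
    simp only [e0]
    rw [Nat.mul_div_cancel_left _ two_pos]
    exact cmp_apriori_even_isBigO hν m
  · subst hm
    rw [show (2 * m + 1) / 2 = m by omega]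
    have hsum := (cmp_apriori_even_isBigO hν m).add
      ((cmp_apriori_even_isBigO hν (m + 1)).trans (cmp_pow_isBigO (Nat.le_succ m)))
    refine Asymptotics.IsBigO.trans ?_ hsum
    apply cmp_isBigO_of_le (C := 1) one_pos
    intro u hu _
    have hid := CmpPG.id
    rw [one_mul, ← cmpE_add hν hu (hid.pow _) (hid.pow _)]
    refine le_trans ?_ (le_abs_self _)
    apply abs_cmpE_le hν hu (hid.abs.pow _) ((hid.pow _).add (hid.pow _))
    intro x _
    rw [abs_of_nonneg (by positivity), pow_succ, e0, show 2 * (m + 1) = 2 * m + 2 by ring,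
      pow_add x]
    have : 0 ≤ x ^ (2 * m) := by rw [← e0]; positivity
    have h : |x| ≤ 1 + x ^ 2 := by nlinarith [sq_abs x, sq_nonneg (|x| - 1)]
    nlinarith

/-- Moments of `u X - 1`. -/
noncomputable def cmpM (ν : ℝ) (k : ℕ) (u : ℝ) : ℝ := cmpE ν u (fun x => x ^ k)

lemma cmpM_isBigO {ν : ℝ} (hν : 0 < ν) {k n : ℕ} (h : 2 * n ≤ k) :
    (cmpM ν k) =O[nhdsWithin 0 (Set.Ioi 0)] fun u => u ^ n := by
  refine Asymptotics.IsBigO.trans ?_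
    ((cmp_apriori_abs hν k).trans (cmp_pow_isBigO (by omega : n ≤ k / 2)))
  apply cmp_isBigO_of_le (C := 1) one_pos
  intro u hu _
  rw [one_mul]
  refine le_trans ?_ (le_abs_self _)
  exact abs_cmpE_le hν hu (CmpPG.id.pow _) (CmpPG.id.abs.pow _) fun x _ => by rw [abs_pow]

lemma cmpM_zero {ν u : ℝ} (hν : 0 < ν) (hu : 0 < u) : cmpM ν 0 u = 1 := by
  simp [cmpM, cmpE_one hν hu]

/-- The approximate moment recursion. -/
lemma cmpM_rec {ν : ℝ} (hν : 0 < ν) (k L n : ℕ) (h : 2 * n ≤ k + L) :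
    (fun u => ∑ i ∈ Finset.range L, Ring.choose ν i * cmpM ν (k + i) u
      - ∑ j ∈ Finset.range (k + 1), (k.choose j : ℝ) * u ^ (k - j) * cmpM ν j u)
      =O[nhdsWithin 0 (Set.Ioi 0)] fun u => u ^ n := by
  obtain ⟨C, hC, P, H⟩ := cmp_taylor ν hν L
  have hB : (fun u => C * (cmpE ν u (fun x => |x| ^ (k + L)) + cmpE ν u (fun x => |x| ^ (k + L + P))))
      =O[nhdsWithin 0 (Set.Ioi 0)] fun u => u ^ n :=
    Asymptotics.IsBigO.const_mul_left (((cmp_apriori_abs hν (k + L)).trans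
      (cmp_pow_isBigO (by omega))).add ((cmp_apriori_abs hν (k + L + P)).trans
      (cmp_pow_isBigO (by omega)))) C
  refine Asymptotics.IsBigO.trans ?_ hB
  apply cmp_isBigO_of_le (C := 1) one_pos
  intro u hu _
  have hid := CmpPG.id
  have e1 : ∑ i ∈ Finset.range L, Ring.choose ν i * cmpM ν (k + i) u =
      cmpE ν u (fun x => ∑ i ∈ Finset.range L, Ring.choose ν i * x ^ (k + i)) := by
    rw [cmpE_sum hν hu]
    · simp only [cmpE_const_mul, cmpM]
    · exact fun i _ => (CmpPG.const _).mul (hid.pow _)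
  have e2 : ∑ j ∈ Finset.range (k + 1), (k.choose j : ℝ) * u ^ (k - j) * cmpM ν j u =
      cmpE ν u (fun x => (1 + x) ^ ν * x ^ k) := by
    rw [cmpE_stein hν hu (hid.pow k)]
    have : (fun x : ℝ => (x + u) ^ k) =
        fun x => ∑ j ∈ Finset.range (k + 1), ((k.choose j : ℝ) * u ^ (k - j)) * x ^ j := by
      ext x
      rw [add_pow]
      exact Finset.sum_congr rfl fun j _ => by ring
    rw [this, cmpE_sum hν hu]
    · simp only [cmpE_const_mul, cmpM]
    · exact fun i _ => (CmpPG.const _).mul (hid.pow _)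
  have hS : CmpPG (fun x => ∑ i ∈ Finset.range L, Ring.choose ν i * x ^ (k + i)) :=
    CmpPG.sum _ fun i _ => (CmpPG.const _).mul (hid.pow _)
  rw [e1, e2, ← cmpE_sub hν hu hS ((CmpPG.rpow hν).mul (hid.pow _)), one_mul,
    ← cmpE_add hν hu (hid.abs.pow _) (hid.abs.pow _), ← cmpE_const_mul]
  refine le_trans ?_ (le_abs_self _)
  apply abs_cmpE_le hν hu (hS.sub ((CmpPG.rpow hν).mul (hid.pow _)))
    ((CmpPG.const _).mul ((hid.abs.pow _).add (hid.abs.pow _)))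
  intro x hx
  have e3 : ∑ i ∈ Finset.range L, Ring.choose ν i * x ^ (k + i) - (1 + x) ^ ν * x ^ k =
      -(x ^ k * ((1 + x) ^ ν - ∑ i ∈ Finset.range L, Ring.choose ν i * x ^ i)) := by
    rw [mul_sub, Finset.mul_sum, neg_sub, mul_comm (x ^ k) ((1 + x) ^ ν)]
    congr 1
    exact Finset.sum_congr rfl fun j _ => by ring
  rw [e3, abs_neg, abs_mul, abs_pow]
  calc _ ≤ |x| ^ k * (C * (|x| ^ L + |x| ^ (L + P))) :=
        mul_le_mul_of_nonneg_left (H x hx) (by positivity)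
    _ = _ := by ring

/-! ### Expansion coefficients -/

/-- Coefficient of `u ^ r` in the asymptotic expansion of the `k`-th moment of `u X - 1`. -/
noncomputable def cmpA (ν : ℝ) (k r : ℕ) : ℝ :=
  if _h : 2 * r < k then 0 else
  match k with
  | 0 => if r = 0 then 1 else 0
  | k + 1 =>
    (1 / ν) * (∑ j : Fin k, (if _hj : k - j ≤ r then
        (k.choose j : ℝ) * cmpA ν j (r - (k - j)) else 0)
      - ∑ i : Fin (2 * r - (k + 1)), Ring.choose ν (i + 2) * cmpA ν (k + (i + 2)) r)
termination_by (r, 2 * r - k)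
decreasing_by
  · have := j.2
    apply Prod.Lex.left; omega
  · have := i.2
    apply Prod.Lex.right; omega

lemma cmpA_of_lt (ν : ℝ) {k r : ℕ} (h : 2 * r < k) : cmpA ν k r = 0 := by
  rw [cmpA, dif_pos h]

lemma cmpA_zero (ν : ℝ) (r : ℕ) : cmpA ν 0 r = if r = 0 then 1 else 0 := by
  rw [cmpA, dif_neg (by omega)]

lemma cmpA_succ (ν : ℝ) {k r : ℕ} (h : k + 1 ≤ 2 * r) :
    cmpA ν (k + 1) r = (1 / ν) * (∑ j ∈ Finset.range k, (if k - j ≤ r then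
        (k.choose j : ℝ) * cmpA ν j (r - (k - j)) else 0)
      - ∑ i ∈ Finset.range (2 * r - (k + 1)), Ring.choose ν (i + 2) * cmpA ν (k + (i + 2)) r) := by
  rw [cmpA, dif_neg (by omega)]
  simp only [dite_eq_ite]
  rw [← Fin.sum_univ_eq_sum_range (fun j => if k - j ≤ r then
        (k.choose j : ℝ) * cmpA ν j (r - (k - j)) else 0) k,
    ← Fin.sum_univ_eq_sum_range (fun i => Ring.choose ν (i + 2) * cmpA ν (k + (i + 2)) r)
      (2 * r - (k + 1))]

lemma cmpA_rec {ν : ℝ} (hν : 0 < ν) (k r K : ℕ) (h : 2 * r ≤ k + 1 + K) :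
    ν * cmpA ν (k + 1) r = ∑ j ∈ Finset.range k, (if k - j ≤ r then
        (k.choose j : ℝ) * cmpA ν j (r - (k - j)) else 0)
      - ∑ i ∈ Finset.range K, Ring.choose ν (i + 2) * cmpA ν (k + (i + 2)) r := by
  by_cases hk : k + 1 ≤ 2 * r
  · rw [cmpA_succ ν hk, ← mul_assoc, mul_one_div_cancel hν.ne', one_mul]
    congr 1
    apply Finset.sum_subset
    · intro i hi
      rw [Finset.mem_range] at hi ⊢
      omega
    · intro i _ hi
      rw [Finset.mem_range] at hi
      rw [cmpA_of_lt ν (by omega), mul_zero]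
  · rw [cmpA_of_lt ν (by omega), mul_zero, Finset.sum_eq_zero, Finset.sum_eq_zero, sub_zero]
    · intro i _
      rw [cmpA_of_lt ν (by omega), mul_zero]
    · intro j hj
      rw [Finset.mem_range] at hj
      split_ifs with h1
      · rw [cmpA_of_lt ν (by omega), mul_zero]
      · rfl

/-- Truncated expansion. -/
noncomputable def cmpS (ν : ℝ) (k N : ℕ) (u : ℝ) : ℝ :=
  ∑ r ∈ Finset.range N, cmpA ν k r * u ^ r

lemma cmpS_rec {ν : ℝ} (hν : 0 < ν) (k N K : ℕ) (h : 2 * N ≤ k + 3 + K) (u : ℝ) :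
    ν * cmpS ν (k + 1) N u =
      ∑ j ∈ Finset.range k, (k.choose j : ℝ) * (u ^ (k - j) * cmpS ν j (N - (k - j)) u)
      - ∑ i ∈ Finset.range K, Ring.choose ν (i + 2) * cmpS ν (k + (i + 2)) N u := by
  unfold cmpS
  have h1 : ν * ∑ r ∈ Finset.range N, cmpA ν (k + 1) r * u ^ r =
      ∑ r ∈ Finset.range N, (∑ j ∈ Finset.range k, (if k - j ≤ r then
        (k.choose j : ℝ) * cmpA ν j (r - (k - j)) else 0)
      - ∑ i ∈ Finset.range K, Ring.choose ν (i + 2) * cmpA ν (k + (i + 2)) r) * u ^ r := by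
    rw [Finset.mul_sum]
    apply Finset.sum_congr rfl
    intro r hr
    rw [Finset.mem_range] at hr
    rw [← mul_assoc, cmpA_rec hν k r K (by omega)]
  rw [h1]
  simp only [sub_mul, Finset.sum_sub_distrib, Finset.sum_mul]
  congr 1
  · rw [Finset.sum_comm]
    apply Finset.sum_congr rfl
    intro j _
    set d := k - j
    rcases le_total d N with hd | hd
    · obtain ⟨m, rfl⟩ := Nat.exists_eq_add_of_le hd
      rw [Finset.sum_range_add, Nat.add_sub_cancel_left, Finset.sum_eq_zero, zero_add,
        Finset.mul_sum, Finset.mul_sum]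
      · apply Finset.sum_congr rfl
        intro r _
        rw [if_pos (by omega), Nat.add_sub_cancel_left, pow_add]
        ring
      · intro r hr
        rw [Finset.mem_range] at hr
        rw [if_neg (by omega), zero_mul]
    · rw [Nat.sub_eq_zero_of_le hd, Finset.sum_range_zero, mul_zero, mul_zero]
      apply Finset.sum_eq_zero
      intro r hr
      rw [Finset.mem_range] at hr
      rw [if_neg (by omega), zero_mul]
  · rw [Finset.sum_comm]
    apply Finset.sum_congr rfl
    intro i _
    rw [Finset.mul_sum]
    exact Finset.sum_congr rfl fun r _ => by ring

/-- Asymptotic expansion of the moments. -/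
theorem cmpM_expansion {ν : ℝ} (hν : 0 < ν) (N : ℕ) : ∀ k : ℕ,
    (fun u => cmpM ν k u - cmpS ν k N u) =O[nhdsWithin 0 (Set.Ioi 0)] fun u => u ^ N := by
  induction N using Nat.strong_induction_on with
  | _ N IH =>
  intro k
  induction hd : 2 * N - k using Nat.strong_induction_on generalizing k with
  | _ d ih =>
  by_cases hk : 2 * N ≤ k
  · refine (cmpM_isBigO hν hk).congr_left fun u => ?_
    unfold cmpS
    rw [Finset.sum_eq_zero, sub_zero]
    intro r hr
    rw [Finset.mem_range] at hr
    rw [cmpA_of_lt ν (by omega), zero_mul]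
  push Not at hk
  rcases k with _ | k
  · have hN : 0 < N := by omega
    have hS : ∀ u, cmpS ν 0 N u = 1 := by
      intro u
      unfold cmpS
      simp only [cmpA_zero]
      rw [Finset.sum_eq_single 0]
      · simp
      · intro r _ hr
        simp [hr]
      · intro h
        exact absurd (Finset.mem_range.2 hN) h
    apply cmp_isBigO_of_le (C := 1) one_pos
    intro u hu _
    rw [hS, cmpM_zero hν hu]
    simp
  ·
    set K := 2 * N - k - 2 with hK
    have hL : 2 * N ≤ k + (K + 2) := by omega
    have hrec := cmpM_rec hν k (K + 2) N hL
    have h1 : (fun u => ∑ j ∈ Finset.range k, (k.choose j : ℝ) *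
        (u ^ (k - j) * (cmpM ν j u - cmpS ν j (N - (k - j)) u)))
        =O[nhdsWithin 0 (Set.Ioi 0)] fun u => u ^ N := by
      apply Asymptotics.IsBigO.fun_sum
      intro j hj
      rw [Finset.mem_range] at hj
      apply Asymptotics.IsBigO.const_mul_left
      have h2 := IH (N - (k - j)) (by omega) j
      have h3 := (Asymptotics.isBigO_refl (fun u : ℝ => u ^ (k - j))
        (nhdsWithin 0 (Set.Ioi 0))).mul h2
      refine h3.trans ?_
      simp only [← pow_add]
      exact cmp_pow_isBigO (by omega)
    have h2 : (fun u => ∑ i ∈ Finset.range K, Ring.choose ν (i + 2) *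
        (cmpM ν (k + (i + 2)) u - cmpS ν (k + (i + 2)) N u))
        =O[nhdsWithin 0 (Set.Ioi 0)] fun u => u ^ N := by
      apply Asymptotics.IsBigO.fun_sum
      intro i hi
      rw [Finset.mem_range] at hi
      apply Asymptotics.IsBigO.const_mul_left
      exact ih (2 * N - (k + (i + 2))) (by omega) _ rfl
    have h3 := ((hrec.add h1).sub h2).const_mul_left (1 / ν)
    refine h3.congr_left fun u => ?_
    have hS := cmpS_rec hν k N K (by omega) u
    rw [one_div, inv_mul_eq_iff_eq_mul₀ hν.ne', mul_sub, hS,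
      Finset.sum_range_succ (fun j => (k.choose j : ℝ) * u ^ (k - j) * cmpM ν j u),
      Finset.sum_range_succ' _ (K + 1), Finset.sum_range_succ' _ K]
    simp only [mul_sub, Finset.sum_sub_distrib]
    simp only [Nat.choose_self, Nat.sub_self, pow_zero, Ring.choose_zero_right, zero_add,
      Ring.choose_one_right, add_assoc, Nat.reduceAdd, add_zero, Nat.cast_one, one_mul, mul_assoc]
    ring

/-! ### Explicit coefficients -/

lemma cmp_choose_values (a : ℝ) :
    Ring.choose a 2 = a * (a - 1) / 2 ∧
    Ring.choose a 3 = a * (a - 1) * (a - 2) / 6 ∧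
    Ring.choose a 4 = a * (a - 1) * (a - 2) * (a - 3) / 24 ∧
    Ring.choose a 5 = a * (a - 1) * (a - 2) * (a - 3) * (a - 4) / 120 ∧
    Ring.choose a 6 = a * (a - 1) * (a - 2) * (a - 3) * (a - 4) * (a - 5) / 720 ∧
    Ring.choose a 7 = a * (a - 1) * (a - 2) * (a - 3) * (a - 4) * (a - 5) * (a - 6) / 5040 ∧
    Ring.choose a 8 =
      a * (a - 1) * (a - 2) * (a - 3) * (a - 4) * (a - 5) * (a - 6) * (a - 7) / 40320 := by
  have h2 : Ring.choose a 2 = a * (a - 1) / 2 := by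
    rw [cmp_choose_succ a 1, Ring.choose_one_right]; norm_num
  have h3 : Ring.choose a 3 = a * (a - 1) * (a - 2) / 6 := by
    rw [cmp_choose_succ a 2, h2]; norm_num; ring
  have h4 : Ring.choose a 4 = a * (a - 1) * (a - 2) * (a - 3) / 24 := by
    rw [cmp_choose_succ a 3, h3]; norm_num; ring
  have h5 : Ring.choose a 5 = a * (a - 1) * (a - 2) * (a - 3) * (a - 4) / 120 := by
    rw [cmp_choose_succ a 4, h4]; norm_num; ring
  have h6 : Ring.choose a 6 = a * (a - 1) * (a - 2) * (a - 3) * (a - 4) * (a - 5) / 720 := by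
    rw [cmp_choose_succ a 5, h5]; norm_num; ring
  have h7 : Ring.choose a 7 =
      a * (a - 1) * (a - 2) * (a - 3) * (a - 4) * (a - 5) * (a - 6) / 5040 := by
    rw [cmp_choose_succ a 6, h6]; norm_num; ring
  have h8 : Ring.choose a 8 =
      a * (a - 1) * (a - 2) * (a - 3) * (a - 4) * (a - 5) * (a - 6) * (a - 7) / 40320 := by
    rw [cmp_choose_succ a 7, h7]; norm_num; ring
  exact ⟨h2, h3, h4, h5, h6, h7, h8⟩

lemma cmpA_2_1 (ν : ℝ) (hν : ν ≠ 0) :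
    cmpA ν 2 1 = ((1)) / (1 * ν ^ 1) := by
  rw [cmpA_succ ν (k := 1) (by norm_num)]
  simp [Finset.sum_range_succ, cmpA_zero, Nat.choose]
  try field_simp
  try ring

lemma cmpA_1_1 (ν : ℝ) (hν : ν ≠ 0) :
    cmpA ν 1 1 = ((-1) * ν ^ 1 + (1)) / (2 * ν ^ 1) := by
  obtain ⟨c2, c3, c4, c5, c6, c7, c8⟩ := cmp_choose_values ν
  rw [cmpA_succ ν (k := 0) (by norm_num)]
  simp [Finset.sum_range_succ, cmpA_zero, cmpA_2_1 ν hν, c2]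
  try field_simp
  try ring

lemma cmpA_4_2 (ν : ℝ) (hν : ν ≠ 0) :
    cmpA ν 4 2 = ((3)) / (1 * ν ^ 2) := by
  have z1_0 : cmpA ν 1 0 = 0 := cmpA_of_lt ν (by norm_num)
  rw [cmpA_succ ν (k := 3) (by norm_num)]
  simp [Finset.sum_range_succ, cmpA_zero, cmpA_2_1 ν hν, z1_0, Nat.choose]
  try field_simp
  try ring

lemma cmpA_3_2 (ν : ℝ) (hν : ν ≠ 0) :
    cmpA ν 3 2 = ((-3) * ν ^ 1 + (5)) / (2 * ν ^ 2) := by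
  obtain ⟨c2, c3, c4, c5, c6, c7, c8⟩ := cmp_choose_values ν
  rw [cmpA_succ ν (k := 2) (by norm_num)]
  simp [Finset.sum_range_succ, cmpA_zero, cmpA_1_1 ν hν, cmpA_4_2 ν hν, c2, Nat.choose]
  try field_simp
  try ring

lemma cmpA_2_2 (ν : ℝ) (hν : ν ≠ 0) :
    cmpA ν 2 2 = ((1) * ν ^ 2 + (-2) * ν ^ 1 + (1)) / (4 * ν ^ 2) := by
  obtain ⟨c2, c3, c4, c5, c6, c7, c8⟩ := cmp_choose_values ν
  rw [cmpA_succ ν (k := 1) (by norm_num)]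
  simp [Finset.sum_range_succ, cmpA_zero, cmpA_3_2 ν hν, cmpA_4_2 ν hν, c2, c3, Nat.choose]
  try field_simp
  try ring

lemma cmpA_1_2 (ν : ℝ) (hν : ν ≠ 0) :
    cmpA ν 1 2 = ((-1) * ν ^ 2 + (1)) / (24 * ν ^ 2) := by
  obtain ⟨c2, c3, c4, c5, c6, c7, c8⟩ := cmp_choose_values ν
  rw [cmpA_succ ν (k := 0) (by norm_num)]
  simp [Finset.sum_range_succ, cmpA_zero, cmpA_2_2 ν hν, cmpA_3_2 ν hν, cmpA_4_2 ν hν, c2, c3, c4]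
  try field_simp
  try ring

lemma cmpA_6_3 (ν : ℝ) (hν : ν ≠ 0) :
    cmpA ν 6 3 = ((15)) / (1 * ν ^ 3) := by
  have z2_0 : cmpA ν 2 0 = 0 := cmpA_of_lt ν (by norm_num)
  have z3_1 : cmpA ν 3 1 = 0 := cmpA_of_lt ν (by norm_num)
  rw [cmpA_succ ν (k := 5) (by norm_num)]
  simp [Finset.sum_range_succ, cmpA_zero, cmpA_4_2 ν hν, z2_0, z3_1, Nat.choose]
  try field_simp
  try ring

lemma cmpA_5_3 (ν : ℝ) (hν : ν ≠ 0) :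
    cmpA ν 5 3 = ((-15) * ν ^ 1 + (35)) / (2 * ν ^ 3) := by
  obtain ⟨c2, c3, c4, c5, c6, c7, c8⟩ := cmp_choose_values ν
  have z1_0 : cmpA ν 1 0 = 0 := cmpA_of_lt ν (by norm_num)
  rw [cmpA_succ ν (k := 4) (by norm_num)]
  simp [Finset.sum_range_succ, cmpA_zero, cmpA_2_1 ν hν, cmpA_3_2 ν hν, cmpA_6_3 ν hν, z1_0, c2, Nat.choose]
  try field_simp
  try ring

lemma cmpA_4_3 (ν : ℝ) (hν : ν ≠ 0) :
    cmpA ν 4 3 = ((3) * ν ^ 2 + (-10) * ν ^ 1 + (9)) / (2 * ν ^ 3) := by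
  obtain ⟨c2, c3, c4, c5, c6, c7, c8⟩ := cmp_choose_values ν
  rw [cmpA_succ ν (k := 3) (by norm_num)]
  simp [Finset.sum_range_succ, cmpA_zero, cmpA_1_1 ν hν, cmpA_2_2 ν hν, cmpA_5_3 ν hν, cmpA_6_3 ν hν, c2, c3, Nat.choose]
  try field_simp
  try ring

lemma cmpA_3_3 (ν : ℝ) (hν : ν ≠ 0) :
    cmpA ν 3 3 = ((-1) * ν ^ 3 + (2) * ν ^ 2 + (-3) * ν ^ 1 + (2)) / (8 * ν ^ 3) := by
  obtain ⟨c2, c3, c4, c5, c6, c7, c8⟩ := cmp_choose_values ν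
  rw [cmpA_succ ν (k := 2) (by norm_num)]
  simp [Finset.sum_range_succ, cmpA_zero, cmpA_1_2 ν hν, cmpA_4_3 ν hν, cmpA_5_3 ν hν, cmpA_6_3 ν hν, c2, c3, c4, Nat.choose]
  try field_simp
  try ring

lemma cmpA_2_3 (ν : ℝ) (hν : ν ≠ 0) :
    cmpA ν 2 3 = ((1) * ν ^ 2 + (-1)) / (24 * ν ^ 2) := by
  obtain ⟨c2, c3, c4, c5, c6, c7, c8⟩ := cmp_choose_values ν
  rw [cmpA_succ ν (k := 1) (by norm_num)]
  simp [Finset.sum_range_succ, cmpA_zero, cmpA_3_3 ν hν, cmpA_4_3 ν hν, cmpA_5_3 ν hν, cmpA_6_3 ν hν, c2, c3, c4, c5, Nat.choose]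
  try field_simp
  try ring

lemma cmpA_1_3 (ν : ℝ) (hν : ν ≠ 0) :
    cmpA ν 1 3 = ((-1) * ν ^ 2 + (1)) / (24 * ν ^ 3) := by
  obtain ⟨c2, c3, c4, c5, c6, c7, c8⟩ := cmp_choose_values ν
  rw [cmpA_succ ν (k := 0) (by norm_num)]
  simp [Finset.sum_range_succ, cmpA_zero, cmpA_2_3 ν hν, cmpA_3_3 ν hν, cmpA_4_3 ν hν, cmpA_5_3 ν hν, cmpA_6_3 ν hν, c2, c3, c4, c5, c6]
  try field_simp
  try ring

lemma cmpA_8_4 (ν : ℝ) (hν : ν ≠ 0) :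
    cmpA ν 8 4 = ((105)) / (1 * ν ^ 4) := by
  have z3_0 : cmpA ν 3 0 = 0 := cmpA_of_lt ν (by norm_num)
  have z4_1 : cmpA ν 4 1 = 0 := cmpA_of_lt ν (by norm_num)
  have z5_2 : cmpA ν 5 2 = 0 := cmpA_of_lt ν (by norm_num)
  rw [cmpA_succ ν (k := 7) (by norm_num)]
  simp [Finset.sum_range_succ, cmpA_zero, cmpA_6_3 ν hν, z3_0, z4_1, z5_2, Nat.choose]
  try field_simp
  try ring

lemma cmpA_7_4 (ν : ℝ) (hν : ν ≠ 0) :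
    cmpA ν 7 4 = ((-105) * ν ^ 1 + (315)) / (2 * ν ^ 4) := by
  obtain ⟨c2, c3, c4, c5, c6, c7, c8⟩ := cmp_choose_values ν
  have z2_0 : cmpA ν 2 0 = 0 := cmpA_of_lt ν (by norm_num)
  have z3_1 : cmpA ν 3 1 = 0 := cmpA_of_lt ν (by norm_num)
  rw [cmpA_succ ν (k := 6) (by norm_num)]
  simp [Finset.sum_range_succ, cmpA_zero, cmpA_4_2 ν hν, cmpA_5_3 ν hν, cmpA_8_4 ν hν, z2_0, z3_1, c2, Nat.choose]
  try field_simp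
  try ring

lemma cmpA_6_4 (ν : ℝ) (hν : ν ≠ 0) :
    cmpA ν 6 4 = ((45) * ν ^ 2 + (-210) * ν ^ 1 + (265)) / (4 * ν ^ 4) := by
  obtain ⟨c2, c3, c4, c5, c6, c7, c8⟩ := cmp_choose_values ν
  have z1_0 : cmpA ν 1 0 = 0 := cmpA_of_lt ν (by norm_num)
  rw [cmpA_succ ν (k := 5) (by norm_num)]
  simp [Finset.sum_range_succ, cmpA_zero, cmpA_2_1 ν hν, cmpA_3_2 ν hν, cmpA_4_3 ν hν, cmpA_7_4 ν hν, cmpA_8_4 ν hν, z1_0, c2, c3, Nat.choose]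
  try field_simp
  try ring

lemma cmpA_5_4 (ν : ℝ) (hν : ν ≠ 0) :
    cmpA ν 5 4 = ((-10) * ν ^ 3 + (45) * ν ^ 2 + (-90) * ν ^ 1 + (63)) / (8 * ν ^ 4) := by
  obtain ⟨c2, c3, c4, c5, c6, c7, c8⟩ := cmp_choose_values ν
  rw [cmpA_succ ν (k := 4) (by norm_num)]
  simp [Finset.sum_range_succ, cmpA_zero, cmpA_1_1 ν hν, cmpA_2_2 ν hν, cmpA_3_3 ν hν, cmpA_6_4 ν hν, cmpA_7_4 ν hν, cmpA_8_4 ν hν, c2, c3, c4, Nat.choose]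
  try field_simp
  try ring

lemma cmpA_4_4 (ν : ℝ) (hν : ν ≠ 0) :
    cmpA ν 4 4 = ((3) * ν ^ 4 + (10) * ν ^ 2 + (-24) * ν ^ 1 + (11)) / (48 * ν ^ 4) := by
  obtain ⟨c2, c3, c4, c5, c6, c7, c8⟩ := cmp_choose_values ν
  rw [cmpA_succ ν (k := 3) (by norm_num)]
  simp [Finset.sum_range_succ, cmpA_zero, cmpA_1_2 ν hν, cmpA_2_3 ν hν, cmpA_5_4 ν hν, cmpA_6_4 ν hν, cmpA_7_4 ν hν, cmpA_8_4 ν hν, c2, c3, c4, c5, Nat.choose]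
  try field_simp
  try ring

lemma cmpA_3_4 (ν : ℝ) (hν : ν ≠ 0) :
    cmpA ν 3 4 = ((-3) * ν ^ 4 + (-10) * ν ^ 2 + (13)) / (96 * ν ^ 4) := by
  obtain ⟨c2, c3, c4, c5, c6, c7, c8⟩ := cmp_choose_values ν
  rw [cmpA_succ ν (k := 2) (by norm_num)]
  simp [Finset.sum_range_succ, cmpA_zero, cmpA_1_3 ν hν, cmpA_4_4 ν hν, cmpA_5_4 ν hν, cmpA_6_4 ν hν, cmpA_7_4 ν hν, cmpA_8_4 ν hν, c2, c3, c4, c5, c6, Nat.choose]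
  try field_simp
  try ring

lemma cmpA_2_4 (ν : ℝ) (hν : ν ≠ 0) :
    cmpA ν 2 4 = ((1) * ν ^ 4 + (24) * ν ^ 3 + (22) * ν ^ 2 + (-24) * ν ^ 1 + (-23)) / (576 * ν ^ 4) := by
  obtain ⟨c2, c3, c4, c5, c6, c7, c8⟩ := cmp_choose_values ν
  rw [cmpA_succ ν (k := 1) (by norm_num)]
  simp [Finset.sum_range_succ, cmpA_zero, cmpA_3_4 ν hν, cmpA_4_4 ν hν, cmpA_5_4 ν hν, cmpA_6_4 ν hν, cmpA_7_4 ν hν, cmpA_8_4 ν hν, c2, c3, c4, c5, c6, c7, Nat.choose]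
  try field_simp
  try ring

lemma cmpA_1_4 (ν : ℝ) (hν : ν ≠ 0) :
    cmpA ν 1 4 = ((9) * ν ^ 4 + (-170) * ν ^ 2 + (161)) / (1920 * ν ^ 4) := by
  obtain ⟨c2, c3, c4, c5, c6, c7, c8⟩ := cmp_choose_values ν
  rw [cmpA_succ ν (k := 0) (by norm_num)]
  simp [Finset.sum_range_succ, cmpA_zero, cmpA_2_4 ν hν, cmpA_3_4 ν hν, cmpA_4_4 ν hν, cmpA_5_4 ν hν, cmpA_6_4 ν hν, cmpA_7_4 ν hν, cmpA_8_4 ν hν, c2, c3, c4, c5, c6, c7, c8]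
  try field_simp
  try ring

lemma cmpA_10_5 (ν : ℝ) (hν : ν ≠ 0) :
    cmpA ν 10 5 = ((945)) / (1 * ν ^ 5) := by
  have z4_0 : cmpA ν 4 0 = 0 := cmpA_of_lt ν (by norm_num)
  have z5_1 : cmpA ν 5 1 = 0 := cmpA_of_lt ν (by norm_num)
  have z6_2 : cmpA ν 6 2 = 0 := cmpA_of_lt ν (by norm_num)
  have z7_3 : cmpA ν 7 3 = 0 := cmpA_of_lt ν (by norm_num)
  rw [cmpA_succ ν (k := 9) (by norm_num)]
  simp [Finset.sum_range_succ, cmpA_zero, cmpA_8_4 ν hν, z4_0, z5_1, z6_2, z7_3, Nat.choose]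
  try field_simp
  try ring

lemma cmpA_9_5 (ν : ℝ) (hν : ν ≠ 0) :
    cmpA ν 9 5 = ((-945) * ν ^ 1 + (3465)) / (2 * ν ^ 5) := by
  obtain ⟨c2, c3, c4, c5, c6, c7, c8⟩ := cmp_choose_values ν
  have z3_0 : cmpA ν 3 0 = 0 := cmpA_of_lt ν (by norm_num)
  have z4_1 : cmpA ν 4 1 = 0 := cmpA_of_lt ν (by norm_num)
  have z5_2 : cmpA ν 5 2 = 0 := cmpA_of_lt ν (by norm_num)
  rw [cmpA_succ ν (k := 8) (by norm_num)]
  simp [Finset.sum_range_succ, cmpA_zero, cmpA_6_3 ν hν, cmpA_7_4 ν hν, cmpA_10_5 ν hν, z3_0, z4_1, z5_2, c2, Nat.choose]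
  try field_simp
  try ring

lemma cmpA_8_5 (ν : ℝ) (hν : ν ≠ 0) :
    cmpA ν 8 5 = ((105) * ν ^ 2 + (-630) * ν ^ 1 + (1015)) / (1 * ν ^ 5) := by
  obtain ⟨c2, c3, c4, c5, c6, c7, c8⟩ := cmp_choose_values ν
  have z2_0 : cmpA ν 2 0 = 0 := cmpA_of_lt ν (by norm_num)
  have z3_1 : cmpA ν 3 1 = 0 := cmpA_of_lt ν (by norm_num)
  rw [cmpA_succ ν (k := 7) (by norm_num)]
  simp [Finset.sum_range_succ, cmpA_zero, cmpA_4_2 ν hν, cmpA_5_3 ν hν, cmpA_6_4 ν hν, cmpA_9_5 ν hν, cmpA_10_5 ν hν, z2_0, z3_1, c2, c3, Nat.choose]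
  try field_simp
  try ring

lemma cmpA_7_5 (ν : ℝ) (hν : ν ≠ 0) :
    cmpA ν 7 5 = ((-105) * ν ^ 3 + (700) * ν ^ 2 + (-1855) * ν ^ 1 + (1708)) / (8 * ν ^ 5) := by
  obtain ⟨c2, c3, c4, c5, c6, c7, c8⟩ := cmp_choose_values ν
  have z1_0 : cmpA ν 1 0 = 0 := cmpA_of_lt ν (by norm_num)
  rw [cmpA_succ ν (k := 6) (by norm_num)]
  simp [Finset.sum_range_succ, cmpA_zero, cmpA_2_1 ν hν, cmpA_3_2 ν hν, cmpA_4_3 ν hν, cmpA_5_4 ν hν, cmpA_8_5 ν hν, cmpA_9_5 ν hν, cmpA_10_5 ν hν, z1_0, c2, c3, c4, Nat.choose]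
  try field_simp
  try ring

lemma cmpA_6_5 (ν : ℝ) (hν : ν ≠ 0) :
    cmpA ν 6 5 = ((15) * ν ^ 4 + (-70) * ν ^ 3 + (230) * ν ^ 2 + (-378) * ν ^ 1 + (219)) / (16 * ν ^ 5) := by
  obtain ⟨c2, c3, c4, c5, c6, c7, c8⟩ := cmp_choose_values ν
  rw [cmpA_succ ν (k := 5) (by norm_num)]
  simp [Finset.sum_range_succ, cmpA_zero, cmpA_1_1 ν hν, cmpA_2_2 ν hν, cmpA_3_3 ν hν, cmpA_4_4 ν hν, cmpA_7_5 ν hν, cmpA_8_5 ν hν, cmpA_9_5 ν hν, cmpA_10_5 ν hν, c2, c3, c4, c5, Nat.choose]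
  try field_simp
  try ring

lemma cmpA_5_5 (ν : ℝ) (hν : ν ≠ 0) :
    cmpA ν 5 5 = ((-3) * ν ^ 5 + (-15) * ν ^ 4 + (10) * ν ^ 3 + (-30) * ν ^ 2 + (-55) * ν ^ 1 + (93)) / (96 * ν ^ 5) := by
  obtain ⟨c2, c3, c4, c5, c6, c7, c8⟩ := cmp_choose_values ν
  rw [cmpA_succ ν (k := 4) (by norm_num)]
  simp [Finset.sum_range_succ, cmpA_zero, cmpA_1_2 ν hν, cmpA_2_3 ν hν, cmpA_3_4 ν hν, cmpA_6_5 ν hν, cmpA_7_5 ν hν, cmpA_8_5 ν hν, cmpA_9_5 ν hν, cmpA_10_5 ν hν, c2, c3, c4, c5, c6, Nat.choose]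
  try field_simp
  try ring

lemma cmpA_4_5 (ν : ℝ) (hν : ν ≠ 0) :
    cmpA ν 4 5 = ((2) * ν ^ 5 + (1) * ν ^ 4 + (24) * ν ^ 3 + (6) * ν ^ 2 + (-26) * ν ^ 1 + (-7)) / (96 * ν ^ 5) := by
  obtain ⟨c2, c3, c4, c5, c6, c7, c8⟩ := cmp_choose_values ν
  rw [cmpA_succ ν (k := 3) (by norm_num)]
  simp [Finset.sum_range_succ, cmpA_zero, cmpA_1_3 ν hν, cmpA_2_4 ν hν, cmpA_5_5 ν hν, cmpA_6_5 ν hν, cmpA_7_5 ν hν, cmpA_8_5 ν hν, cmpA_9_5 ν hν, cmpA_10_5 ν hν, c2, c3, c4, c5, c6, c7, Nat.choose]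
  try field_simp
  try ring

lemma cmpA_3_5 (ν : ℝ) (hν : ν ≠ 0) :
    cmpA ν 3 5 = ((-5) * ν ^ 5 + (-38) * ν ^ 4 + (-110) * ν ^ 3 + (-580) * ν ^ 2 + (115) * ν ^ 1 + (618)) / (1920 * ν ^ 5) := by
  obtain ⟨c2, c3, c4, c5, c6, c7, c8⟩ := cmp_choose_values ν
  rw [cmpA_succ ν (k := 2) (by norm_num)]
  simp [Finset.sum_range_succ, cmpA_zero, cmpA_1_4 ν hν, cmpA_4_5 ν hν, cmpA_5_5 ν hν, cmpA_6_5 ν hν, cmpA_7_5 ν hν, cmpA_8_5 ν hν, cmpA_9_5 ν hν, cmpA_10_5 ν hν, c2, c3, c4, c5, c6, c7, c8, Nat.choose]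
  try field_simp
  try ring

/-! ### Passing to central moments -/

lemma cmpMean_eq {ν u : ℝ} (hν : 0 < ν) (hu : 0 < u) :
    cmpMean (u ^ (-ν)) ν = (cmpM ν 1 u + 1) / u := by
  have h1 : cmpMean (u ^ (-ν)) ν = cmpE ν u (fun x => (1 / u) * (x ^ 1 + 1)) := by
    unfold cmpMean cmpE
    congr 1
    apply tsum_congr
    intro j
    unfold cmpW
    field_simp
    ring
  rw [h1, cmpE_const_mul, cmpE_add hν hu (CmpPG.id.pow 1) (CmpPG.const 1), cmpE_one hν hu]
  unfold cmpM
  ring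

lemma cmpCentralMoment_eq {ν u : ℝ} (hν : 0 < ν) (hu : 0 < u) (k : ℕ) :
    cmpCentralMoment k (u ^ (-ν)) ν =
      (1 / u) ^ k * cmpE ν u (fun x => (x - cmpM ν 1 u) ^ k) := by
  rw [← cmpE_const_mul]
  unfold cmpCentralMoment
  rw [cmpMean_eq hν hu]
  unfold cmpE
  congr 1
  apply tsum_congr
  intro j
  unfold cmpW
  dsimp only
  rw [← mul_pow, mul_div_assoc]
  congr 2
  field_simp
  ring

lemma cmpCentralMoment_two {ν u : ℝ} (hν : 0 < ν) (hu : 0 < u) :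
    cmpCentralMoment 2 (u ^ (-ν)) ν = (1 / u) ^ 2 * (cmpM ν 2 u - cmpM ν 1 u ^ 2) := by
  rw [cmpCentralMoment_eq hν hu]
  congr 1
  set m := cmpM ν 1 u with hm
  have hid := CmpPG.id
  have e : (fun x : ℝ => (x - m) ^ 2) = fun x => (x ^ 2 + (-2 * m) * x ^ 1) + m ^ 2 := by
    ext x; ring
  rw [e, cmpE_add hν hu ((hid.pow 2).add ((CmpPG.const _).mul (hid.pow 1))) (CmpPG.const _),
    cmpE_add hν hu (hid.pow 2) ((CmpPG.const _).mul (hid.pow 1)), cmpE_const_mul,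
    cmpE_const hν hu]
  have e1 : cmpE ν u (fun x => x ^ 1) = m := rfl
  rw [e1]
  unfold cmpM
  ring

lemma cmpCentralMoment_three {ν u : ℝ} (hν : 0 < ν) (hu : 0 < u) :
    cmpCentralMoment 3 (u ^ (-ν)) ν = (1 / u) ^ 3 *
      (cmpM ν 3 u - 3 * cmpM ν 1 u * (cmpM ν 2 u - cmpM ν 1 u ^ 2) - cmpM ν 1 u ^ 3) := by
  rw [cmpCentralMoment_eq hν hu]
  congr 1
  set m := cmpM ν 1 u with hm
  have hid := CmpPG.id
  have e : (fun x : ℝ => (x - m) ^ 3) =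
      fun x => ((x ^ 3 + (-3 * m) * x ^ 2) + (3 * m ^ 2) * x ^ 1) + (- m ^ 3) := by
    ext x; ring
  have p2 : CmpPG (fun x => (-3 * m) * x ^ 2) := (CmpPG.const _).mul (hid.pow 2)
  have p1 : CmpPG (fun x => (3 * m ^ 2) * x ^ 1) := (CmpPG.const _).mul (hid.pow 1)
  rw [e, cmpE_add hν hu (((hid.pow 3).add p2).add p1) (CmpPG.const _),
    cmpE_add hν hu ((hid.pow 3).add p2) p1, cmpE_add hν hu (hid.pow 3) p2, cmpE_const_mul,
    cmpE_const_mul, cmpE_const hν hu]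
  have e1 : cmpE ν u (fun x => x ^ 1) = m := rfl
  rw [e1]
  unfold cmpM
  ring

/-- Boundedness near `0+`. -/
def CmpBd (f : ℝ → ℝ) : Prop := f =O[nhdsWithin 0 (Set.Ioi 0)] fun _ => (1 : ℝ)

lemma CmpBd.const (c : ℝ) : CmpBd (fun _ => c) := Asymptotics.isBigO_const_const c one_ne_zero _

lemma CmpBd.id : CmpBd (fun u => u) := by
  have := cmp_pow_isBigO (m := 1) (n := 0) (by norm_num)
  simpa [CmpBd] using this

lemma CmpBd.add {f g : ℝ → ℝ} (hf : CmpBd f) (hg : CmpBd g) : CmpBd (fun u => f u + g u) :=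
  Asymptotics.IsBigO.add hf hg

lemma CmpBd.sub {f g : ℝ → ℝ} (hf : CmpBd f) (hg : CmpBd g) : CmpBd (fun u => f u - g u) :=
  Asymptotics.IsBigO.sub hf hg

lemma CmpBd.mul {f g : ℝ → ℝ} (hf : CmpBd f) (hg : CmpBd g) : CmpBd (fun u => f u * g u) := by
  have := Asymptotics.IsBigO.mul hf hg
  simpa [CmpBd] using this

lemma CmpBd.pow {f : ℝ → ℝ} (hf : CmpBd f) (n : ℕ) : CmpBd (fun u => f u ^ n) := by
  induction n with
  | zero => simpa using CmpBd.const 1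
  | succ n ih => simpa [pow_succ] using ih.mul hf

lemma CmpBd.pow_mul {f : ℝ → ℝ} (hf : CmpBd f) (n : ℕ) :
    (fun u => u ^ n * f u) =O[nhdsWithin 0 (Set.Ioi 0)] fun u => u ^ n := by
  have := (Asymptotics.isBigO_refl (fun u : ℝ => u ^ n) (nhdsWithin 0 (Set.Ioi 0))).mul hf
  simpa using this

/-- Remainder function of the moment expansion. -/
lemma cmpM_remainder {ν : ℝ} (hν : 0 < ν) (k N : ℕ) :
    ∃ f : ℝ → ℝ, CmpBd f ∧ ∀ u, 0 < u → cmpM ν k u = cmpS ν k N u + u ^ N * f u := by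
  refine ⟨fun u => (cmpM ν k u - cmpS ν k N u) / u ^ N, ?_, fun u hu => ?_⟩
  · obtain ⟨C, hC⟩ := (cmpM_expansion hν N k).bound
    apply Asymptotics.IsBigO.of_bound C
    filter_upwards [hC, self_mem_nhdsWithin] with u hu hu0
    have hu0' : (0 : ℝ) < u := hu0
    rw [norm_div, div_le_iff₀ (norm_pos_iff.2 (by positivity))]
    simpa using hu
  · have : u ^ N ≠ 0 := by positivity
    field_simp
    ring

lemma cmp_central_expansions {ν : ℝ} (hν : 0 < ν) :
    ∃ g1 g2 : ℝ → ℝ, CmpBd g1 ∧ CmpBd g2 ∧ ∀ u, 0 < u →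
      cmpM ν 2 u - cmpM ν 1 u ^ 2 = u / ν * (1 + ((ν ^ 2 - 1) / (24 * ν ^ 2) * u ^ 2
        + 4 * ((ν ^ 2 - 1) / (48 * ν ^ 3)) * u ^ 3 + u ^ 4 * g1 u)) ∧
      cmpM ν 3 u - 3 * cmpM ν 1 u * (cmpM ν 2 u - cmpM ν 1 u ^ 2) - cmpM ν 1 u ^ 3 =
        u ^ 2 / ν ^ 2 * (1 + (-((ν ^ 2 - 1) / (24 * ν ^ 2)) * u ^ 2
        - 8 * ((ν ^ 2 - 1) / (48 * ν ^ 3)) * u ^ 3 + u ^ 4 * g2 u)) := by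
  have hn : ν ≠ 0 := hν.ne'
  obtain ⟨f1, b1, H1⟩ := cmpM_remainder hν 1 5
  obtain ⟨f2, b2, H2⟩ := cmpM_remainder hν 2 5
  obtain ⟨f3, b3, H3⟩ := cmpM_remainder hν 3 6
  have z10 : cmpA ν 1 0 = 0 := cmpA_of_lt ν (by norm_num)
  have z20 : cmpA ν 2 0 = 0 := cmpA_of_lt ν (by norm_num)
  have z30 : cmpA ν 3 0 = 0 := cmpA_of_lt ν (by norm_num)
  have z31 : cmpA ν 3 1 = 0 := cmpA_of_lt ν (by norm_num)
  simp only [cmpS, Finset.sum_range_succ, Finset.sum_range_zero, z10, z20, z30, z31] at H1 H2 H3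
  have A1 := cmpA_1_1 ν hn
  have A2 := cmpA_1_2 ν hn
  have A3 := cmpA_1_3 ν hn
  have C1 := cmpA_2_1 ν hn
  have C2 := cmpA_2_2 ν hn
  have C3 := cmpA_2_3 ν hn
  have C4 := cmpA_2_4 ν hn
  have D2 := cmpA_3_2 ν hn
  have D3 := cmpA_3_3 ν hn
  have D4 := cmpA_3_4 ν hn
  have D5 := cmpA_3_5 ν hn
  have A4 := cmpA_1_4 ν hn
  set a1 := cmpA ν 1 1
  set a2 := cmpA ν 1 2
  set a3 := cmpA ν 1 3
  set a4 := cmpA ν 1 4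
  set c1 := cmpA ν 2 1
  set c2 := cmpA ν 2 2
  set c3 := cmpA ν 2 3
  set c4 := cmpA ν 2 4
  set d2 := cmpA ν 3 2
  set d3 := cmpA ν 3 3
  set d4 := cmpA ν 3 4
  set d5 := cmpA ν 3 5
  set v1 := 1 / ν with hv1
  set v3 := (ν ^ 2 - 1) / (24 * ν ^ 3) with hv3
  set v4 := (ν ^ 2 - 1) / (12 * ν ^ 4) with hv4
  set t4 := -((ν ^ 2 - 1) / (24 * ν ^ 4)) with ht4
  set t5 := -((ν ^ 2 - 1) / (6 * ν ^ 5)) with ht5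
  have k1 : c1 = v1 := by rw [C1, hv1]; field_simp
  have k2 : c2 - a1 ^ 2 = 0 := by rw [C2, A1]; field_simp; ring
  have k3 : c3 - 2 * a1 * a2 = v3 := by rw [C3, A1, A2, hv3]; field_simp; ring
  have k4 : c4 - (2 * a1 * a3 + a2 ^ 2) = v4 := by rw [C4, A1, A2, A3, hv4]; field_simp; ring
  have m2 : d2 - 3 * a1 * v1 = v1 ^ 2 := by rw [D2, A1, hv1]; field_simp; ring
  have m3 : d3 - 3 * a2 * v1 - a1 ^ 3 = 0 := by rw [D3, A1, A2, hv1]; field_simp; ring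
  have m4 : d4 - 3 * (a3 * v1 + a1 * v3) - 3 * a1 ^ 2 * a2 = t4 := by
    rw [D4, A1, A2, A3, hv1, hv3, ht4]; field_simp; ring
  have m5 : d5 - 3 * (a4 * v1 + a2 * v3 + a1 * v4) - (3 * a1 ^ 2 * a3 + 3 * a1 * a2 ^ 2) = t5 := by
    rw [D5, A1, A2, A3, A4, hv1, hv3, hv4, ht5]; field_simp; ring
  clear_value a1 a2 a3 a4 c1 c2 c3 c4 d2 d3 d4 d5
  clear A1 A2 A3 A4 C1 C2 C3 C4 D2 D3 D4 D5
  have bid := CmpBd.id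
  obtain ⟨F4, hF4⟩ : ∃ F : ℝ → ℝ, F = fun u => a4 + u * f1 u := ⟨_, rfl⟩
  obtain ⟨F3, hF3⟩ : ∃ F : ℝ → ℝ, F = fun u => a3 + u * F4 u := ⟨_, rfl⟩
  obtain ⟨R, hR⟩ : ∃ F : ℝ → ℝ, F = fun u => 2 * a1 * F4 u + 2 * a2 * F3 u + u * F3 u ^ 2 :=
    ⟨_, rfl⟩
  obtain ⟨fV, hfV⟩ : ∃ F : ℝ → ℝ, F = fun u => f2 u - R u := ⟨_, rfl⟩
  obtain ⟨Q, hQ⟩ : ∃ F : ℝ → ℝ, F = fun u => (a1 * fV u + a2 * v4 + a3 * v3 + f1 u * v1)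
      + u * (a2 * fV u + a3 * v4 + a4 * v3) + u ^ 2 * (a3 * fV u + a4 * v4 + f1 u * v3)
      + u ^ 3 * (a4 * fV u + f1 u * v4) + u ^ 4 * (f1 u * fV u) := ⟨_, rfl⟩
  obtain ⟨S, hS⟩ : ∃ F : ℝ → ℝ, F = fun u => a1 ^ 2 * F4 u + 2 * a1 * a2 * F3 u
      + (2 * a1 * a3 + a2 ^ 2) * a2 + (2 * a1 * a3 + a2 ^ 2) * u * F3 u
      + R u * (a1 + a2 * u + u ^ 2 * F3 u) := ⟨_, rfl⟩
  have bF4 : CmpBd F4 := by rw [hF4]; exact (CmpBd.const _).add (bid.mul b1)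
  have bF3 : CmpBd F3 := by rw [hF3]; exact (CmpBd.const _).add (bid.mul bF4)
  have bR : CmpBd R := by
    rw [hR]
    exact (((CmpBd.const _).mul bF4).add ((CmpBd.const _).mul bF3)).add (bid.mul (bF3.pow 2))
  have bV : CmpBd fV := by rw [hfV]; exact b2.sub bR
  have bQ : CmpBd Q := by
    rw [hQ]
    repeat' first
      | assumption | exact CmpBd.const _ | apply CmpBd.add | apply CmpBd.mul | apply CmpBd.pow
  have bS : CmpBd S := by
    rw [hS]
    repeat' first
      | assumption | exact CmpBd.const _ | apply CmpBd.add | apply CmpBd.mul | apply CmpBd.pow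
  have hVexp : ∀ u, 0 < u → cmpM ν 2 u - cmpM ν 1 u ^ 2 =
      u * (v1 + v3 * u ^ 2 + v4 * u ^ 3 + u ^ 4 * fV u) := by
    intro u hu
    rw [H1 u hu, H2 u hu, hfV, hR, hF3, hF4]
    dsimp only
    linear_combination u * k1 + u ^ 2 * k2 + u ^ 3 * k3 + u ^ 4 * k4
  refine ⟨fun u => ν * fV u, fun u => ν ^ 2 * (f3 u - 3 * Q u - S u),
    (CmpBd.const _).mul bV, (CmpBd.const _).mul ((b3.sub ((CmpBd.const _).mul bQ)).sub bS),
    fun u hu => ⟨?_, ?_⟩⟩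
  · rw [hVexp u hu, hv1, hv3, hv4]
    field_simp
    ring
  · have hT : cmpM ν 3 u - 3 * cmpM ν 1 u * (cmpM ν 2 u - cmpM ν 1 u ^ 2) - cmpM ν 1 u ^ 3 =
        u ^ 2 * (v1 ^ 2 + t4 * u ^ 2 + t5 * u ^ 3 + u ^ 4 * (f3 u - 3 * Q u - S u)) := by
      rw [hVexp u hu, H1 u hu, H3 u hu, hQ, hS, hR, hF3, hF4]
      dsimp only
      linear_combination u ^ 2 * m2 + u ^ 3 * m3 + u ^ 4 * m4 + u ^ 5 * m5
    rw [hT, hv1, ht4, ht5]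
    field_simp
    ring

/-! ### The skewness -/

lemma cmpSkewness_formula {ν u s t : ℝ} (hν : 0 < ν) (hu : 0 < u) (hs : 0 < 1 + s)
    (hV : cmpM ν 2 u - cmpM ν 1 u ^ 2 = u / ν * (1 + s))
    (hT : cmpM ν 3 u - 3 * cmpM ν 1 u * (cmpM ν 2 u - cmpM ν 1 u ^ 2) - cmpM ν 1 u ^ 3 =
        u ^ 2 / ν ^ 2 * (1 + t)) :
    Real.sqrt ν * (u ^ (-ν)) ^ (1 / (2 * ν)) * cmpSkewness (u ^ (-ν)) ν
      = (1 + t) * (1 + s) ^ (-(3 : ℝ) / 2) := by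
  have pw : ∀ x : ℝ, 0 < x → x ^ ((3 : ℝ) / 2) = Real.sqrt x ^ 3 := by
    intro x hx
    rw [Real.sqrt_eq_rpow, ← Real.rpow_natCast, ← Real.rpow_mul hx.le]
    norm_num
  unfold cmpSkewness
  rw [cmpCentralMoment_two hν hu, cmpCentralMoment_three hν hu, hT, hV]
  have e1 : (1 / u) ^ 2 * (u / ν * (1 + s)) = (1 + s) / (u * ν) := by field_simp
  have e2 : (u ^ (-ν)) ^ (1 / (2 * ν)) = 1 / Real.sqrt u := by
    rw [← Real.rpow_mul hu.le, show -ν * (1 / (2 * ν)) = -(1 / 2) by field_simp,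
      Real.rpow_neg hu.le, ← Real.sqrt_eq_rpow, one_div]
  have e3 : (1 + s) ^ (-(3 : ℝ) / 2) = 1 / Real.sqrt (1 + s) ^ 3 := by
    rw [neg_div, Real.rpow_neg hs.le, pw _ hs, one_div]
  rw [e1, e2, e3, pw _ (by positivity), Real.sqrt_div hs.le, Real.sqrt_mul hu.le]
  have q1 : 0 < Real.sqrt u := Real.sqrt_pos.2 hu
  have q2 : 0 < Real.sqrt ν := Real.sqrt_pos.2 hν
  have q3 : 0 < Real.sqrt (1 + s) := Real.sqrt_pos.2 hs
  have r1 : u = Real.sqrt u ^ 2 := (Real.sq_sqrt hu.le).symm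
  have r2 : ν = Real.sqrt ν ^ 2 := (Real.sq_sqrt hν.le).symm
  generalize Real.sqrt u = a at *
  generalize Real.sqrt ν = b at *
  generalize Real.sqrt (1 + s) = c at *
  rw [r1, r2]
  field_simp

lemma cmpSkewness_small {ν : ℝ} (hν : 0 < ν) :
    (fun u => Real.sqrt ν * (u ^ (-ν)) ^ (1 / (2 * ν)) * cmpSkewness (u ^ (-ν)) ν - 1
      + (5 * (ν ^ 2 - 1) / (48 * ν ^ 2)) * u ^ 2 + (7 * (ν ^ 2 - 1) / (24 * ν ^ 3)) * u ^ 3)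
      =O[nhdsWithin 0 (Set.Ioi 0)] fun u => u ^ 4 := by
  obtain ⟨g1, g2, bg1, bg2, H⟩ := cmp_central_expansions hν
  set B := (ν ^ 2 - 1) / (24 * ν ^ 2) with hB
  set B' := (ν ^ 2 - 1) / (48 * ν ^ 3) with hB'
  obtain ⟨s, hs⟩ : ∃ s : ℝ → ℝ, s = fun u => B * u ^ 2 + 4 * B' * u ^ 3 + u ^ 4 * g1 u := ⟨_, rfl⟩
  obtain ⟨t, ht⟩ : ∃ t : ℝ → ℝ, t = fun u => -B * u ^ 2 - 8 * B' * u ^ 3 + u ^ 4 * g2 u := ⟨_, rfl⟩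
  have bid := CmpBd.id
  have hs2 : s =O[nhdsWithin 0 (Set.Ioi 0)] fun u => u ^ 2 := by
    have : CmpBd (fun u => B + (4 * B') * u + u ^ 2 * g1 u) :=
      ((CmpBd.const _).add ((CmpBd.const _).mul bid)).add ((bid.pow 2).mul bg1)
    refine (this.pow_mul 2).congr_left fun u => ?_
    rw [hs]; ring
  have ht2 : t =O[nhdsWithin 0 (Set.Ioi 0)] fun u => u ^ 2 := by
    have : CmpBd (fun u => -B - (8 * B') * u + u ^ 2 * g2 u) :=
      ((CmpBd.const _).sub ((CmpBd.const _).mul bid)).add ((bid.pow 2).mul bg2)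
    refine (this.pow_mul 2).congr_left fun u => ?_
    rw [ht]; ring
  have hs0 : Filter.Tendsto s (nhdsWithin 0 (Set.Ioi 0)) (nhds 0) := by
    apply hs2.trans_tendsto
    have : Filter.Tendsto (fun u : ℝ => u ^ 2) (nhds 0) (nhds 0) := by
      have := (continuous_pow 2 : Continuous fun u : ℝ => u ^ 2).tendsto 0
      simpa using this
    exact this.mono_left nhdsWithin_le_nhds
  have hρ := (cmp_taylor_local (-(3 : ℝ) / 2) 2).comp_tendsto hs0
  simp only [Function.comp_def, Finset.sum_range_succ, Finset.sum_range_zero,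
    Ring.choose_zero_right, Ring.choose_one_right] at hρ
  have hs4 : (fun u => s u ^ 2) =O[nhdsWithin 0 (Set.Ioi 0)] fun u => u ^ 4 := by
    refine (hs2.pow 2).congr_right fun u => by ring
  have hts : (fun u => t u * s u) =O[nhdsWithin 0 (Set.Ioi 0)] fun u => u ^ 4 := by
    refine (ht2.mul hs2).congr_right fun u => by ring
  have hρ4 := hρ.trans hs4
  have ht1 : CmpBd (fun u => 1 + t u) := by
    apply (CmpBd.const 1).add
    have := ht2.trans (cmp_pow_isBigO (m := 2) (n := 0) (by norm_num))
    simpa [CmpBd] using this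
  have hmul := Asymptotics.IsBigO.mul ht1 hρ4
  have hlin := ((bg2.sub ((CmpBd.const (3 / 2)).mul bg1)).pow_mul 4)
  have htot := (hlin.add (hts.const_mul_left (-(3 / 2)))).add
    (hmul.congr_right (fun u => one_mul (u ^ 4)))
  refine htot.congr' ?_ Filter.EventuallyEq.rfl
  have hev : ∀ᶠ u in nhdsWithin 0 (Set.Ioi 0), -1 < s u :=
    hs0.eventually (lt_mem_nhds (by norm_num))
  filter_upwards [hev, self_mem_nhdsWithin] with u hsu hu
  have hu' : (0 : ℝ) < u := hu
  obtain ⟨hV, hT⟩ := H u hu'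
  have hf := cmpSkewness_formula (s := s u) (t := t u) hν hu' (by linarith)
    (by rw [hV, hs]) (by rw [hT, ht])
  rw [hf]
  have e1 : 5 * (ν ^ 2 - 1) / (48 * ν ^ 2) = 5 / 2 * B := by rw [hB]; field_simp; ring
  have e2 : 7 * (ν ^ 2 - 1) / (24 * ν ^ 3) = 14 * B' := by rw [hB']; field_simp; ring
  rw [e1, e2]
  generalize (1 + s u) ^ (-(3 : ℝ) / 2) = p
  have hsu2 : s u = B * u ^ 2 + 4 * B' * u ^ 3 + u ^ 4 * g1 u := by rw [hs]
  have htu2 : t u = -B * u ^ 2 - 8 * B' * u ^ 3 + u ^ 4 * g2 u := by rw [ht]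
  linear_combination (3 / 2) * hsu2 - htu2

/-- Asymptotics of the skewness of the `CMP(λ,ν)` distribution:
`γ₁ = (λ^{−1/(2ν)}/√ν)(1 − (5(ν²−1)/(48ν²)) λ^{−2/ν} − (7(ν²−1)/(24ν³)) λ^{−3/ν}
  + O(λ^{−4/ν}))` as `λ → ∞`. -/
theorem cmpSkewness_asymptotic (ν : ℝ) (hν : 0 < ν) :
    ∃ C > (0 : ℝ), ∃ Λ > (0 : ℝ), ∀ lam : ℝ, lam ≥ Λ →
      |Real.sqrt ν * lam ^ (1 / (2 * ν)) * cmpSkewness lam ν - 1 +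
          (5 * (ν ^ 2 - 1) / (48 * ν ^ 2)) * lam ^ (-(2 / ν)) +
          (7 * (ν ^ 2 - 1) / (24 * ν ^ 3)) * lam ^ (-(3 / ν))|
        ≤ C * lam ^ (-(4 / ν)) := by
  obtain ⟨C, hC, hb⟩ := (cmpSkewness_small hν).exists_pos
  rw [Asymptotics.IsBigOWith] at hb
  have hlim : Filter.Tendsto (fun lam : ℝ => lam ^ (-(1 / ν))) Filter.atTop
      (nhdsWithin 0 (Set.Ioi 0)) := by
    rw [tendsto_nhdsWithin_iff]
    refine ⟨tendsto_rpow_neg_atTop (by positivity), ?_⟩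
    filter_upwards [Filter.eventually_gt_atTop 0] with lam hlam
    exact Real.rpow_pos_of_pos hlam _
  obtain ⟨Λ, hΛ⟩ := Filter.eventually_atTop.1 (hlim.eventually hb)
  refine ⟨C, hC, max Λ 1, lt_max_of_lt_right one_pos, fun lam hlam => ?_⟩
  have hl1 : 1 ≤ lam := (le_max_right _ _).trans hlam
  have hl0 : 0 < lam := by linarith
  have h := hΛ lam ((le_max_left _ _).trans hlam)
  have e0 : (lam ^ (-(1 / ν))) ^ (-ν) = lam := by
    rw [← Real.rpow_mul hl0.le, show -(1 / ν) * -ν = 1 by field_simp, Real.rpow_one]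
  have ek : ∀ k : ℕ, (lam ^ (-(1 / ν))) ^ k = lam ^ (-((k : ℝ) / ν)) := by
    intro k
    rw [← Real.rpow_natCast, ← Real.rpow_mul hl0.le]
    congr 1
    ring
  rw [e0, ek 2, ek 3, ek 4, Real.norm_eq_abs, Real.norm_of_nonneg (Real.rpow_nonneg hl0.le _)] at h
  exact_mod_cast h
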